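/- arXiv:2110.12953 — 8 statements merged into one kernel-verified Lean document; each statement's English description precedes it below -/
import Mathlib

section
/- Let v⋆ : ℝ → ℝ² be twice continuously differentiable and bounded together with its first two derivatives, and suppose v⋆ solves the profile equation 0 = A v⋆''(x) + c v⋆'(x) + S_ω v⋆(x) + f(v⋆(x)) for all x ∈ ℝ with speed c > 0 and frequency ω ∈ ℝ. Assume α₁ > 0, g₁ and g₂ are continuous, and that v⋆(x) → 0 as x → −∞ and v⋆(x) → v∞ as x → +∞ for some nonzero v∞ ∈ ℝ². Then g(|v∞|²) = −S_ω (equivalently g₁(|v∞|²) = 0 and g₂(|v∞|²) = −ω), and moreover v⋆'(x) → 0 and v⋆''(x) → 0 as x → +∞ and as x → −∞. -/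
/-!
Each component `u` of the profile is a real function with bounded second derivative that converges
at `±∞`. By the mean value theorem, `h u'(x)` differs from `u(x + h) - u(x)` by at most `M h²`, so
`u' → 0` (`tendsto_deriv_zero`). Since `α₁ > 0` makes `A` invertible, the profile equation
expresses `v''` as a continuous function of `v` and `v'`, so `v''` converges too, and its limit must
vanish because `v'` converges (`eq_zero_of_tendsto_deriv`). Passing to the limit in the equation
gives `(S_ω + g(|v∞|²)) v∞ = 0`; the matrix here is a scaled rotation, so it is zero as `v∞ ≠ 0`.

Both ends are treated at once, through a filter `l` that is stable under bounded forward shifts.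
-/

open Matrix Filter Topology MeasureTheory

noncomputable section

/-- The diffusion matrix `A` with rows `(α₁, −α₂)` and `(α₂, α₁)`. -/
def Amat (α₁ α₂ : ℝ) : Matrix (Fin 2) (Fin 2) ℝ := !![α₁, -α₂; α₂, α₁]

/-- The rotation generator `S_ω` with rows `(0, −ω)` and `(ω, 0)`. -/
def Smat (ω : ℝ) : Matrix (Fin 2) (Fin 2) ℝ := !![0, -ω; ω, 0]

/-- The matrix `g(y)` with rows `(g₁ y, −g₂ y)` and `(g₂ y, g₁ y)`. -/
def gmat (g₁ g₂ : ℝ → ℝ) (y : ℝ) : Matrix (Fin 2) (Fin 2) ℝ := !![g₁ y, -g₂ y; g₂ y, g₁ y]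

/-- Squared Euclidean norm `|u|²` on `ℝ²`. -/
def sq2 (u : Fin 2 → ℝ) : ℝ := u 0 ^ 2 + u 1 ^ 2

/-- The nonlinearity `f(u) = g(|u|²) u`. -/
def fnl (g₁ g₂ : ℝ → ℝ) (u : Fin 2 → ℝ) : Fin 2 → ℝ := (gmat g₁ g₂ (sq2 u)).mulVec u

/-- The profile equation `0 = A v'' + c v' + S_ω v + f(v)` on `ℝ`. -/
def ProfileEq (α₁ α₂ c ω : ℝ) (g₁ g₂ : ℝ → ℝ) (v : ℝ → Fin 2 → ℝ) : Prop :=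
  ∀ x : ℝ, (Amat α₁ α₂).mulVec (deriv (deriv v) x) + c • deriv v x
    + (Smat ω).mulVec (v x) + fnl g₁ g₂ (v x) = 0

/-- Stability of a filter on `ℝ` under (variable) shifts by amounts in `[0, 1]`; the common property
of `atTop` and `atBot` on which the asymptotic lemmas rest. -/
def ShiftStable (l : Filter ℝ) : Prop :=
  ∀ ξ : ℝ → ℝ, (∀ x, x ≤ ξ x ∧ ξ x ≤ x + 1) → Tendsto ξ l l

lemma shiftStable_atTop : ShiftStable atTop := fun _ h =>
  tendsto_atTop_mono (fun x => (h x).1) tendsto_id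

lemma shiftStable_atBot : ShiftStable atBot := fun _ h =>
  tendsto_atBot_mono (fun x => (h x).2) (tendsto_atBot_add_const_right _ _ tendsto_id)

lemma exists_mean_value {u u' : ℝ → ℝ} (hu : ∀ x, HasDerivAt u (u' x) x) (x : ℝ) {h : ℝ}
    (hh : 0 < h) : ∃ y, x ≤ y ∧ y ≤ x + h ∧ u (x + h) - u x = h * u' y := by
  obtain ⟨y, hy, e⟩ := exists_hasDerivAt_eq_slope u u' (by linarith : x < x + h)
    (fun z _ => (hu z).continuousAt.continuousWithinAt) (fun z _ => hu z)
  refine ⟨y, hy.1.le, hy.2.le, ?_⟩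
  rw [e, add_sub_cancel_left]
  field_simp

/-- If a function and its derivative both converge, the derivative converges to zero. -/
lemma eq_zero_of_tendsto_deriv {l : Filter ℝ} [l.NeBot] (hl : ShiftStable l) {u u' : ℝ → ℝ}
    (hu : ∀ x, HasDerivAt u (u' x) x) {a b : ℝ} (ha : Tendsto u l (𝓝 a))
    (hb : Tendsto u' l (𝓝 b)) : b = 0 := by
  choose ξ h1 h2 h3 using fun x => exists_mean_value hu x one_pos
  have t1 : Tendsto (fun x => u' (ξ x)) l (𝓝 b) := hb.comp (hl ξ fun x => ⟨h1 x, h2 x⟩)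
  have t2 : Tendsto (fun x => u (x + 1) - u x) l (𝓝 (a - a)) :=
    (ha.comp (hl (fun x => x + 1) fun x => ⟨by linarith, le_rfl⟩)).sub ha
  have e : (fun x => u (x + 1) - u x) = fun x => u' (ξ x) := by
    funext x
    rw [h3 x, one_mul]
  rw [e, sub_self] at t2
  exact tendsto_nhds_unique t1 t2

/-- A convergent function with bounded second derivative has derivative tending to zero. -/
lemma tendsto_deriv_zero {l : Filter ℝ} (hl : ShiftStable l) {u u' u'' : ℝ → ℝ}
    (hu : ∀ x, HasDerivAt u (u' x) x) (hu' : ∀ x, HasDerivAt u' (u'' x) x) {M : ℝ}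
    (hM : ∀ x, |u'' x| ≤ M) {a : ℝ} (ha : Tendsto u l (𝓝 a)) : Tendsto u' l (𝓝 0) := by
  have hM0 : 0 ≤ M := (abs_nonneg _).trans (hM 0)
  have lip : ∀ x y, |u' y - u' x| ≤ M * |y - x| := fun x y =>
    Convex.norm_image_sub_le_of_norm_hasDerivWithin_le (s := Set.univ)
      (fun z _ => (hu' z).hasDerivWithinAt) (fun z _ => hM z) convex_univ trivial trivial
  rw [Metric.tendsto_nhds]
  intro ε hε
  -- The step `h` is chosen so that the Lipschitz error `M * h` is below `ε / 2`.
  obtain ⟨h, hh, hh1, hMh⟩ : ∃ h : ℝ, 0 < h ∧ h ≤ 1 ∧ M * h < ε / 2 := by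
    refine ⟨min 1 (ε / (2 * (M + 1))), by positivity, min_le_left _ _, ?_⟩
    have h0 : 0 < min 1 (ε / (2 * (M + 1))) := by positivity
    have h1 : (M + 1) * min 1 (ε / (2 * (M + 1))) ≤ ε / 2 :=
      (mul_le_mul_of_nonneg_left (min_le_right _ _) (by linarith)).trans_eq (by field_simp)
    linarith
  have t : Tendsto (fun x => u (x + h) - u x) l (𝓝 (a - a)) :=
    (ha.comp (hl (fun x => x + h) fun x => ⟨by linarith, by linarith⟩)).sub ha
  rw [sub_self, Metric.tendsto_nhds] at t
  filter_upwards [t (h * (ε / 2)) (by positivity)] with x hx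
  obtain ⟨y, h1, h2, e⟩ := exists_mean_value hu x hh
  rw [Real.dist_eq, sub_zero, e, abs_mul, abs_of_pos hh] at hx
  have hy : |u' y| < ε / 2 := lt_of_mul_lt_mul_left hx hh.le
  have hxy : |u' y - u' x| ≤ M * h := (lip x y).trans
    (mul_le_mul_of_nonneg_left (by rw [abs_of_nonneg] <;> linarith) hM0)
  rw [Real.dist_eq, sub_zero]
  rw [abs_lt] at hy ⊢
  rw [abs_le] at hxy
  constructor <;> linarith [hxy.1, hxy.2, hy.1, hy.2]

lemma profileEq_components {α₁ α₂ c ω : ℝ} {g₁ g₂ : ℝ → ℝ} {v : ℝ → Fin 2 → ℝ}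
    (h : ProfileEq α₁ α₂ c ω g₁ g₂ v) (x : ℝ) :
    α₁ * deriv (deriv v) x 0 - α₂ * deriv (deriv v) x 1 + c * deriv v x 0 - ω * v x 1
      + (g₁ (sq2 (v x)) * v x 0 - g₂ (sq2 (v x)) * v x 1) = 0 ∧
    α₂ * deriv (deriv v) x 0 + α₁ * deriv (deriv v) x 1 + c * deriv v x 1 + ω * v x 0
      + (g₂ (sq2 (v x)) * v x 0 + g₁ (sq2 (v x)) * v x 1) = 0 := by
  have h0 := congrFun (h x) 0
  have h1 := congrFun (h x) 1
  simp [Amat, Smat, fnl, gmat, Matrix.vecHead, Matrix.vecTail, dotProduct, Fin.sum_univ_two] at h0 h1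
  constructor <;> linarith

/-- At an end where the profile converges to `w`, its derivatives vanish and `w` is a rest state:
`(S_ω + g(|w|²)) w = 0`, written in components. -/
lemma limits_at_end {α₁ α₂ c ω : ℝ} {g₁ g₂ : ℝ → ℝ} {v : ℝ → Fin 2 → ℝ} {w : Fin 2 → ℝ}
    {l : Filter ℝ} [l.NeBot] (hl : ShiftStable l) (hα₁ : 0 < α₁)
    (hg₁ : Continuous g₁) (hg₂ : Continuous g₂) (hv : ContDiff ℝ 2 v) {M : ℝ}
    (hM : ∀ x, ‖deriv (deriv v) x‖ ≤ M) (hp : ProfileEq α₁ α₂ c ω g₁ g₂ v)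
    (hw : Tendsto v l (𝓝 w)) :
    Tendsto (deriv v) l (𝓝 0) ∧ Tendsto (deriv (deriv v)) l (𝓝 0) ∧
    g₁ (sq2 w) * w 0 - (ω + g₂ (sq2 w)) * w 1 = 0 ∧
    (ω + g₂ (sq2 w)) * w 0 + g₁ (sq2 w) * w 1 = 0 := by
  have hd : ∀ x, HasDerivAt v (deriv v x) x := fun x =>
    (hv.differentiable (by norm_num) x).hasDerivAt
  have hv' : ContDiff ℝ 1 (deriv v) := by
    have h2 : ContDiff ℝ (1 + 1) v := by
      convert hv using 1
      norm_num
    exact (contDiff_succ_iff_deriv.1 h2).2.2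
  have hd' : ∀ x, HasDerivAt (deriv v) (deriv (deriv v) x) x := fun x =>
    (hv'.differentiable (by norm_num) x).hasDerivAt
  have hdi : ∀ i x, HasDerivAt (fun x => v x i) (deriv v x i) x := fun i x =>
    hasDerivAt_pi.1 (hd x) i
  have hdi' : ∀ i x, HasDerivAt (fun x => deriv v x i) (deriv (deriv v) x i) x := fun i x =>
    hasDerivAt_pi.1 (hd' x) i
  have hwi : ∀ i, Tendsto (fun x => v x i) l (𝓝 (w i)) := fun i => tendsto_pi_nhds.1 hw i
  have t1 : ∀ i, Tendsto (fun x => deriv v x i) l (𝓝 0) := fun i =>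
    tendsto_deriv_zero hl (hdi i) (hdi' i)
      (fun x => (norm_le_pi_norm (deriv (deriv v) x) i).trans (hM x)) (hwi i)
  have hs : Tendsto (fun x => sq2 (v x)) l (𝓝 (sq2 w)) := ((hwi 0).pow 2).add ((hwi 1).pow 2)
  have hG1 := (hg₁.tendsto _).comp hs
  have hG2 := (hg₂.tendsto _).comp hs
  -- `P` and `Q` are the limits of the two components of `-A v''`.
  set P := g₁ (sq2 w) * w 0 - (ω + g₂ (sq2 w)) * w 1 with hP
  set Q := (ω + g₂ (sq2 w)) * w 0 + g₁ (sq2 w) * w 1 with hQ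
  have tP : Tendsto (fun x => α₁ * deriv (deriv v) x 0 - α₂ * deriv (deriv v) x 1) l (𝓝 (-P)) := by
    have t := ((((t1 0).const_mul c).add (hG1.mul (hwi 0))).sub
      ((hG2.const_add ω).mul (hwi 1))).neg
    refine (t.congr fun x => ?_).trans_eq (by rw [hP]; congr 1; ring)
    have := (profileEq_components hp x).1
    simp only [Function.comp]
    linarith
  have tQ : Tendsto (fun x => α₂ * deriv (deriv v) x 0 + α₁ * deriv (deriv v) x 1) l (𝓝 (-Q)) := by
    have t := ((((t1 1).const_mul c).add ((hG2.const_add ω).mul (hwi 0))).add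
      (hG1.mul (hwi 1))).neg
    refine (t.congr fun x => ?_).trans_eq (by rw [hQ]; congr 1; ring)
    have := (profileEq_components hp x).2
    simp only [Function.comp]
    linarith
  have hD : 0 < α₁ ^ 2 + α₂ ^ 2 := by positivity
  -- `A v''` is the derivative of `A v'`, which tends to zero.
  have P0 : -P = 0 := eq_zero_of_tendsto_deriv hl
    (fun x => ((hdi' 0 x).const_mul α₁).sub ((hdi' 1 x).const_mul α₂))
    (((t1 0).const_mul α₁).sub ((t1 1).const_mul α₂)) tP
  have Q0 : -Q = 0 := eq_zero_of_tendsto_deriv hl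
    (fun x => ((hdi' 0 x).const_mul α₂).add ((hdi' 1 x).const_mul α₁))
    (((t1 0).const_mul α₂).add ((t1 1).const_mul α₁)) tQ
  rw [P0] at tP
  rw [Q0] at tQ
  refine ⟨tendsto_pi_nhds.2 t1, tendsto_pi_nhds.2 fun i => ?_, by linarith, by linarith⟩
  fin_cases i
  · have t := ((tP.const_mul α₁).add (tQ.const_mul α₂)).div_const (α₁ ^ 2 + α₂ ^ 2)
    simp only [mul_zero, add_zero, zero_div] at t
    refine t.congr fun x => ?_
    rw [div_eq_iff hD.ne']
    simp only [Fin.zero_eta]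
    ring
  · have t := ((tQ.const_mul α₁).sub (tP.const_mul α₂)).div_const (α₁ ^ 2 + α₂ ^ 2)
    simp only [mul_zero, sub_zero, zero_div] at t
    refine t.congr fun x => ?_
    rw [div_eq_iff hD.ne']
    simp only [Fin.mk_one]
    ring

/-- Lemma 2.1 (Lemma `lem:asym`): the rest state of a traveling oscillating front satisfies
`g(|v∞|²) = −S_ω`, and the first and second derivatives of the profile tend to `0`
at `±∞`. -/
theorem rest_state_and_derivative_limits
    (α₁ α₂ c ω : ℝ) (g₁ g₂ : ℝ → ℝ)
    (vs : ℝ → Fin 2 → ℝ) (vinf : Fin 2 → ℝ)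
    (hα₁ : 0 < α₁) (hc : 0 < c)
    (hg₁ : Continuous g₁) (hg₂ : Continuous g₂)
    (hsmooth : ContDiff ℝ 2 vs)
    (hbdd : ∃ M : ℝ, ∀ x : ℝ,
      ‖vs x‖ ≤ M ∧ ‖deriv vs x‖ ≤ M ∧ ‖deriv (deriv vs) x‖ ≤ M)
    (hprofile : ProfileEq α₁ α₂ c ω g₁ g₂ vs)
    (hminus : Tendsto vs atBot (𝓝 0))
    (hplus : Tendsto vs atTop (𝓝 vinf))
    (hvinf : vinf ≠ 0) :
    gmat g₁ g₂ (sq2 vinf) = -(Smat ω) ∧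
    (g₁ (sq2 vinf) = 0 ∧ g₂ (sq2 vinf) = -ω) ∧
    Tendsto (deriv vs) atTop (𝓝 0) ∧ Tendsto (deriv vs) atBot (𝓝 0) ∧
    Tendsto (deriv (deriv vs)) atTop (𝓝 0) ∧
    Tendsto (deriv (deriv vs)) atBot (𝓝 0) := by
  obtain ⟨M, hM⟩ := hbdd
  obtain ⟨p1, p2, e1, e2⟩ := limits_at_end shiftStable_atTop hα₁ hg₁ hg₂ hsmooth
    (fun x => (hM x).2.2) hprofile hplus
  obtain ⟨m1, m2, -, -⟩ := limits_at_end shiftStable_atBot hα₁ hg₁ hg₂ hsmooth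
    (fun x => (hM x).2.2) hprofile hminus
  have hpos : sq2 vinf ≠ 0 := by
    intro h
    apply hvinf
    unfold sq2 at h
    have h0 : vinf 0 = 0 := by nlinarith [sq_nonneg (vinf 0), sq_nonneg (vinf 1)]
    have h1 : vinf 1 = 0 := by nlinarith [sq_nonneg (vinf 0), sq_nonneg (vinf 1)]
    funext i
    fin_cases i
    · exact h0
    · exact h1
  have hg1 : g₁ (sq2 vinf) = 0 := by
    have h : g₁ (sq2 vinf) * sq2 vinf = 0 := by
      linear_combination vinf 0 * e1 + vinf 1 * e2 + g₁ (sq2 vinf) * (sq2.eq_def vinf)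
    exact (mul_eq_zero.1 h).resolve_right hpos
  have hg2 : g₂ (sq2 vinf) = -ω := by
    have h : (ω + g₂ (sq2 vinf)) * sq2 vinf = 0 := by
      linear_combination vinf 0 * e2 - vinf 1 * e1 + (ω + g₂ (sq2 vinf)) * (sq2.eq_def vinf)
    linarith [(mul_eq_zero.1 h).resolve_right hpos]
  refine ⟨?_, ⟨hg1, hg2⟩, p1, m1, p2, m2⟩
  ext i j
  fin_cases i <;> fin_cases j <;> simp [gmat, Smat, hg1, hg2]
end
end

section
/- Assume Assumption A1 and Assumption A2. Then the profile v⋆ is five times continuously differentiable with all derivatives up to order five bounded on ℝ, and there exist constants K > 0 and μ⋆ > 0 such that |v⋆(x) − v∞| + |v⋆'(x)| + |v⋆''(x)| + |v⋆'''(x)| ≤ K e^{−μ⋆ x} for all x ≥ 0, and |v⋆(x)| + |v⋆'(x)| + |v⋆''(x)| + |v⋆'''(x)| ≤ K e^{μ⋆ x} for all x ≤ 0. -/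
/-!
Exponential convergence is obtained from Lyapunov functions rather than from invariant manifolds.
If `E' ≥ δ N`, `|E| ≤ C N`, `N' ≥ -C N` and `N → 0` at `+∞`, then `N` decays exponentially
(`decay_of_lyapunov`). Boundedness of `v''` and convergence of `v` give `v' → 0`
(`deriv_tendsto_zero`), and then `v∞` must be a rest state (`equilibrium`):
`g₁(|v∞|²) = 0` and `ω + g₂(|v∞|²) = 0`.

At `-∞`, after reflection, `N = |v|² + |v'|²` and `E = v · A v' + (c / 2) |v|²` work, since
`E' = α₁ |v'|² - g₁(|v|²) |v|²` and `g₁(0) < 0` (`core_zero`).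

At `+∞` the rotational symmetry makes the linearisation at `v∞` degenerate. The symmetry is removed
by following `s = |v|² - r²`, `r = |v∞|`, together with `v'`: to first order these solve
`s' = 2 r v₁'`, `A v'' = -c v' - r s (g₁'(r²), g₂'(r²))`, and the perturbation is small relative to
`|s| + |v'|`. With `N = s² + |v'|²` the form
`E = c s (A v')₁ - r |α|² (v₁')² + k s² - (ε / 2) ((A v')₂)²` works for a suitable `k` and small
`ε`: up to terms of order `ε` its derivative along the linear system is
`4 r c α₁ (v₁')² - c r g₁'(r²) s²`, and the `ε` term contributes the missing `(v₂')²`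
(`quad_pos`, `alg_plus`, `core_plus`). Integrating `v'` then gives the decay of `v - v∞`.

For regularity the equation is written as `v'' = B v' + H(v)` with `H` of class `C³`, and
differentiated repeatedly (`regularity_step`). As `H` vanishes at both rest states and is Lipschitz
on bounded sets, `v''` and `v'''` inherit the decay of `v - v∞` (or `v`) and `v'`
(`pointwise_bound`).
-/

open Matrix Filter Topology MeasureTheory

noncomputable section

/-! ### Exponential decay from a Lyapunov function -/

/-- Differential-inequality criterion for exponential decay. If `E` is controlled by `N`, grows at
rate at least `δ N`, and `N` tends to zero without dropping faster than exponentially, then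
`E + (δ / C) N` increases to `0`, so `-E` dominates `N`, while `e^{(δ / C) x} E` is nondecreasing,
so `-E` decays exponentially. -/
lemma decay_of_lyapunov (E N E' N' : ℝ → ℝ) (X C δ : ℝ) (hδ : 0 < δ) (hC : 0 < C)
    (hE : ∀ x, X ≤ x → HasDerivAt E (E' x) x) (hN : ∀ x, X ≤ x → HasDerivAt N (N' x) x)
    (hE' : ∀ x, X ≤ x → δ * N x ≤ E' x) (hEN : ∀ x, X ≤ x → |E x| ≤ C * N x)
    (hN' : ∀ x, X ≤ x → -(C * N x) ≤ N' x) (hN0 : Tendsto N atTop (𝓝 0)) :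
    ∃ K > 0, ∃ μ > 0, ∀ x, X ≤ x → N x ≤ K * Real.exp (-μ * x) := by
  have hNnn : ∀ x, X ≤ x → 0 ≤ N x := fun x hx => by
    have := (abs_nonneg _).trans (hEN x hx)
    exact nonneg_of_mul_nonneg_right this hC
  have hE0 : Tendsto E atTop (𝓝 0) := by
    have h1 : Tendsto (fun x => C * N x) atTop (𝓝 0) := by simpa using hN0.const_mul C
    refine squeeze_zero_norm' ?_ h1
    filter_upwards [eventually_ge_atTop X] with x hx
    simpa using hEN x hx
  -- `(δ / C) * N ≤ -E`: the function `E + (δ / C) N` is nondecreasing with limit zero.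
  have hlow : ∀ x, X ≤ x → (δ / C) * N x ≤ - E x := by
    have hmono : MonotoneOn (fun x => E x + (δ / C) * N x) (Set.Ici X) := by
      refine monotoneOn_of_hasDerivWithinAt_nonneg (convex_Ici X)
        (f' := fun x => E' x + (δ / C) * N' x) ?_ ?_ ?_
      · intro x hx
        exact ((hE x hx).add ((hN x hx).const_mul _)).continuousAt.continuousWithinAt
      · intro x hx
        have hx' : X ≤ x := interior_subset hx
        exact ((hE x hx').add ((hN x hx').const_mul _)).hasDerivWithinAt
      · intro x hx
        have hx' : X ≤ x := interior_subset hx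
        have h1 := mul_le_mul_of_nonneg_left (hN' x hx') (div_pos hδ hC).le
        have h2 : (δ / C) * -(C * N x) = -(δ * N x) := by field_simp
        have := hE' x hx'
        linarith
    intro x hx
    have hlim : Tendsto (fun x => E x + (δ / C) * N x) atTop (𝓝 0) := by
      simpa using hE0.add (hN0.const_mul (δ / C))
    have := ge_of_tendsto hlim (b := E x + (δ / C) * N x) (by
      filter_upwards [eventually_ge_atTop x] with y hy
      exact hmono hx (hx.trans hy) hy)
    linarith
  -- `e^{(δ / C) x} E` is nondecreasing.
  have hexp : MonotoneOn (fun x => Real.exp (δ / C * x) * E x) (Set.Ici X) := by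
    have hd : ∀ x, X ≤ x → HasDerivAt (fun x => Real.exp (δ / C * x) * E x)
        (Real.exp (δ / C * x) * (δ / C) * E x + Real.exp (δ / C * x) * E' x) x := fun x hx => by
      have h1 : HasDerivAt (fun x : ℝ => δ / C * x) (δ / C) x := by
        simpa using (hasDerivAt_id x).const_mul (δ / C)
      exact h1.exp.mul (hE x hx)
    refine monotoneOn_of_hasDerivWithinAt_nonneg (convex_Ici X)
      (fun x hx => (hd x hx).continuousAt.continuousWithinAt)
      (fun x hx => (hd x (interior_subset hx)).hasDerivWithinAt) ?_
    intro x hx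
    have hx' : X ≤ x := interior_subset hx
    have h1 := hE' x hx'
    have h2 := mul_le_mul_of_nonneg_left (neg_le_of_abs_le (hEN x hx')) (div_pos hδ hC).le
    have h3 : (δ / C) * -(C * N x) = -(δ * N x) := by field_simp
    have : 0 ≤ Real.exp (δ / C * x) * ((δ / C) * E x + E' x) :=
      mul_nonneg (Real.exp_pos _).le (by linarith)
    linarith
  refine ⟨(C / δ) * (|Real.exp (δ / C * X) * E X| + 1), by positivity, δ / C, by positivity, ?_⟩
  intro x hx
  have h1 := hexp (Set.mem_Ici.2 le_rfl) hx hx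
  simp only at h1
  have h2 := hlow x hx
  have h3 : - E x ≤ (|Real.exp (δ / C * X) * E X| + 1) * Real.exp (-(δ / C) * x) := by
    have h4 : - (Real.exp (δ / C * x) * E x) ≤ |Real.exp (δ / C * X) * E X| + 1 := by
      have := neg_abs_le (Real.exp (δ / C * X) * E X)
      linarith
    have h5 := mul_le_mul_of_nonneg_right h4 (Real.exp_pos (-(δ / C) * x)).le
    have h6 : Real.exp (δ / C * x) * Real.exp (-(δ / C) * x) = 1 := by
      rw [← Real.exp_add]; simp
    have h7 : -(Real.exp (δ / C * x) * E x) * Real.exp (-(δ / C) * x) = - E x := by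
      linear_combination (- E x) * h6
    linarith
  calc N x = (C / δ) * ((δ / C) * N x) := by field_simp
    _ ≤ (C / δ) * ((|Real.exp (δ / C * X) * E X| + 1) * Real.exp (-(δ / C) * x)) :=
        mul_le_mul_of_nonneg_left (h2.trans h3) (by positivity)
    _ = _ := by ring

/-! ### The quadratic form at the nonzero rest state -/

lemma abs_const_mul_le {k y t : ℝ} (h : |y| ≤ t) : |k * y| ≤ |k| * t := by
  rw [abs_mul]; exact mul_le_mul_of_nonneg_left h (abs_nonneg k)

lemma abs_mul_le_sq_add_sq (x y : ℝ) : |x * y| ≤ x ^ 2 + y ^ 2 :=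
  abs_le.2 ⟨by nlinarith [sq_nonneg (x + y), sq_nonneg x, sq_nonneg y],
    by nlinarith [sq_nonneg (x - y), sq_nonneg x, sq_nonneg y]⟩

/-- The quadratic form in `(s, p, q)` given by the linear part of `E'` near `v∞` is positive
definite for a suitably small `ε`: the first two terms control `s` and `p`, the last one supplies
`q²` up to a multiple of `s² + p²`. -/
lemma quad_pos (α₁ α₂ c r γ1 γ2 : ℝ) (hα : 0 < α₁) (hc : 0 < c) (hr : 0 < r) (hγ : γ1 < 0) :
    ∃ ε > 0, ∃ δ > 0, ∀ s p q : ℝ, δ * (s ^ 2 + p ^ 2 + q ^ 2) ≤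
      4 * r * c * α₁ * p ^ 2 + c * r * (-γ1) * s ^ 2
        + ε * ((α₂ * p + α₁ * q) * (c * q + r * γ2 * s)) := by
  set m := min (4 * r * c * α₁) (c * r * (-γ1)) with hm
  have hmpos : 0 < m := lt_min (by positivity) (mul_pos (by positivity) (by linarith))
  set Q := c * α₂ ^ 2 / α₁ + r ^ 2 * γ2 ^ 2 * α₁ / c + (r * γ2 * α₂) ^ 2 + 1 with hQ
  have hQpos : 0 < Q := by positivity
  have key : ∀ s p q : ℝ, c * α₁ / 2 * q ^ 2 - Q * (s ^ 2 + p ^ 2) ≤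
      (α₂ * p + α₁ * q) * (c * q + r * γ2 * s) := by
    intro s p q
    have h1 : 0 ≤ c * α₁ / 4 * q ^ 2 + c * α₂ * (p * q) + c * α₂ ^ 2 / α₁ * p ^ 2 := by
      have : c * α₁ / 4 * q ^ 2 + c * α₂ * (p * q) + c * α₂ ^ 2 / α₁ * p ^ 2
          = c / α₁ * (α₁ / 2 * q + α₂ * p) ^ 2 := by field_simp; ring
      rw [this]; positivity
    have h2 : 0 ≤ c * α₁ / 4 * q ^ 2 + r * γ2 * α₁ * (s * q)
        + r ^ 2 * γ2 ^ 2 * α₁ / c * s ^ 2 := by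
      have : c * α₁ / 4 * q ^ 2 + r * γ2 * α₁ * (s * q) + r ^ 2 * γ2 ^ 2 * α₁ / c * s ^ 2
          = α₁ / c * (c / 2 * q + r * γ2 * s) ^ 2 := by field_simp; ring
      rw [this]; positivity
    have h3 : 0 ≤ (r * γ2 * α₂) ^ 2 * s ^ 2 + r * γ2 * α₂ * (s * p) + p ^ 2 := by
      nlinarith [sq_nonneg (r * γ2 * α₂ * s + p), sq_nonneg (r * γ2 * α₂ * s), sq_nonneg p]
    have h4 : 0 ≤ c * α₂ ^ 2 / α₁ * s ^ 2 := by positivity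
    have h5 : 0 ≤ r ^ 2 * γ2 ^ 2 * α₁ / c * p ^ 2 := by positivity
    have h6 : 0 ≤ (r * γ2 * α₂) ^ 2 * p ^ 2 := by positivity
    have h7 : Q * (s ^ 2 + p ^ 2) = c * α₂ ^ 2 / α₁ * s ^ 2 + c * α₂ ^ 2 / α₁ * p ^ 2
       + r ^ 2 * γ2 ^ 2 * α₁ / c * s ^ 2 + r ^ 2 * γ2 ^ 2 * α₁ / c * p ^ 2
       + (r * γ2 * α₂) ^ 2 * s ^ 2 + (r * γ2 * α₂) ^ 2 * p ^ 2 + s ^ 2 + p ^ 2 := by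
      rw [hQ]; ring
    have h8 : (α₂ * p + α₁ * q) * (c * q + r * γ2 * s) = c * α₁ * q ^ 2 + c * α₂ * (p * q)
      + r * γ2 * α₁ * (s * q) + r * γ2 * α₂ * (s * p) := by ring
    rw [h7, h8]
    have := sq_nonneg s
    linarith
  refine ⟨m / (2 * Q), by positivity, min (m / 2) (m / (2 * Q) * (c * α₁ / 2)),
    lt_min (by positivity) (by positivity), ?_⟩
  intro s p q
  have k := mul_le_mul_of_nonneg_left (key s p q) (by positivity : 0 ≤ m / (2 * Q))
  have k1 : m / (2 * Q) * (c * α₁ / 2 * q ^ 2 - Q * (s ^ 2 + p ^ 2))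
      = m / (2 * Q) * (c * α₁ / 2) * q ^ 2 - m / 2 * (s ^ 2 + p ^ 2) := by field_simp
  have k2 := mul_le_mul_of_nonneg_right (min_le_left (4 * r * c * α₁) (c * r * (-γ1)))
    (sq_nonneg p)
  have k3 := mul_le_mul_of_nonneg_right (min_le_right (4 * r * c * α₁) (c * r * (-γ1)))
    (sq_nonneg s)
  have k4 := mul_le_mul_of_nonneg_right (min_le_left (m / 2) (m / (2 * Q) * (c * α₁ / 2)))
    (add_nonneg (sq_nonneg s) (sq_nonneg p))
  have k5 := mul_le_mul_of_nonneg_right (min_le_right (m / 2) (m / (2 * Q) * (c * α₁ / 2)))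
    (sq_nonneg q)
  rw [← hm] at k2 k3
  linarith

/-- Pointwise form of the Lyapunov estimates near `v∞`. Here `s` stands for `|v|² - r²`, `(p, q)`
for `v'`, primes for derivatives, and `e0, e1, e2` for the deviation from the linearised system;
`|v|²` is used in place of `v - v∞` because it does not see the neutral direction generated by
rotations. The three conclusions are `δ N ≤ E'`, `|E| ≤ C N` and `-C N ≤ N'` for
`N = s² + p² + q²` and a quadratic form `E`. -/
lemma alg_plus (α₁ α₂ c r γ1 γ2 : ℝ) (hα : 0 < α₁) (hc : 0 < c) (hr : 0 < r) (hγ : γ1 < 0) :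
    ∃ ε k : ℝ, ∃ δ > 0, ∃ C > 0, ∃ η > 0, ∀ s p q s' p' q' e0 e1 e2 : ℝ,
      |e0| ≤ η * (|s| + |p| + |q|) → |e1| ≤ η * (|s| + |p| + |q|) →
      |e2| ≤ η * (|s| + |p| + |q|) →
      s' = 2 * r * p + e0 →
      α₁ * p' - α₂ * q' = -c * p - r * γ1 * s + e1 →
      α₂ * p' + α₁ * q' = -c * q - r * γ2 * s + e2 →
      δ * (s ^ 2 + p ^ 2 + q ^ 2) ≤
        c * (s' * (α₁ * p - α₂ * q) + s * (α₁ * p' - α₂ * q'))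
          - r * (α₁ ^ 2 + α₂ ^ 2) * (2 * p * p') + k * (2 * s * s')
          - ε * ((α₂ * p + α₁ * q) * (α₂ * p' + α₁ * q')) ∧
      |c * (s * (α₁ * p - α₂ * q)) - r * (α₁ ^ 2 + α₂ ^ 2) * p ^ 2 + k * s ^ 2
        - ε / 2 * (α₂ * p + α₁ * q) ^ 2| ≤ C * (s ^ 2 + p ^ 2 + q ^ 2) ∧
      -(C * (s ^ 2 + p ^ 2 + q ^ 2)) ≤ 2 * s * s' + 2 * p * p' + 2 * q * q' := by
  obtain ⟨ε, hε, δ, hδ, hquad⟩ := quad_pos α₁ α₂ c r γ1 γ2 hα hc hr hγ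
  -- `k` is chosen so that the `s p` cross terms in the derivative of the form cancel.
  set k := c ^ 2 / (4 * r) - (α₁ * γ1 + α₂ * γ2) * r / 2 with hk
  have hk4 : 4 * r * k = c ^ 2 - 2 * r ^ 2 * (α₁ * γ1 + α₂ * γ2) := by
    rw [hk]; field_simp; ring
  -- sums of absolute values of the coefficients of the error terms
  set C₁ := |c * α₁| + |c * α₂| + |c| + |2 * r * α₁| + |2 * r * α₂| + |2 * k| + |ε * α₂|
    + |ε * α₁| with hC₁
  set η := min 1 (δ / (6 * (C₁ + 1))) with hη
  have hC₁nn : 0 ≤ C₁ := by positivity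
  have hηpos : 0 < η := lt_min one_pos (by positivity)
  have hD : 0 < α₁ ^ 2 + α₂ ^ 2 := by positivity
  set d := (α₁ ^ 2 + α₂ ^ 2)⁻¹ with hd
  have hdD : d * (α₁ ^ 2 + α₂ ^ 2) = 1 := inv_mul_cancel₀ hD.ne'
  set C₂ := |c * α₁| + |c * α₂| + |r * (α₁ ^ 2 + α₂ ^ 2)| + |k| + |ε / 2 * α₂ ^ 2|
    + |ε * α₁ * α₂| + |ε / 2 * α₁ ^ 2| with hC₂
  set C₃ := |4 * r| + 6 + 2 * |2 * d * α₁ * c|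
    + |2 * d * r * (α₁ * γ1 + α₂ * γ2)| + |2 * d * r * (α₁ * γ2 - α₂ * γ1)|
    + 6 * |2 * d * α₁| + 6 * |2 * d * α₂| with hC₃
  refine ⟨ε, k, δ / 2, by positivity, C₂ + C₃ + 1, by positivity, η, hηpos, ?_⟩
  intro s p q s' p' q' e0 e1 e2 he0 he1 he2 hs' h1 h2
  set N := s ^ 2 + p ^ 2 + q ^ 2 with hN
  have hN0 : 0 ≤ N := by positivity
  have hn : (|s| + |p| + |q|) ^ 2 ≤ 3 * N := by
    rw [hN, ← sq_abs s, ← sq_abs p, ← sq_abs q]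
    nlinarith only [sq_nonneg (|s| - |p|), sq_nonneg (|s| - |q|), sq_nonneg (|p| - |q|)]
  have hprod : ∀ y e : ℝ, |y| ≤ |s| + |p| + |q| → |e| ≤ η * (|s| + |p| + |q|) →
      |y * e| ≤ 3 * η * N := by
    intro y e hy he
    rw [abs_mul]
    calc |y| * |e| ≤ (|s| + |p| + |q|) * (η * (|s| + |p| + |q|)) :=
          mul_le_mul hy he (abs_nonneg _) (by positivity)
      _ = η * (|s| + |p| + |q|) ^ 2 := by ring
      _ ≤ η * (3 * N) := mul_le_mul_of_nonneg_left hn hηpos.le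
      _ = _ := by ring
  have hsn : |s| ≤ |s| + |p| + |q| := by linarith [abs_nonneg p, abs_nonneg q]
  have hpn : |p| ≤ |s| + |p| + |q| := by linarith [abs_nonneg s, abs_nonneg q]
  have hqn : |q| ≤ |s| + |p| + |q| := by linarith [abs_nonneg s, abs_nonneg p]
  have hη1 : η ≤ 1 := min_le_left _ _
  have hηδ : 3 * η * C₁ ≤ δ / 2 := by
    have : η ≤ δ / (6 * (C₁ + 1)) := min_le_right _ _
    rw [le_div_iff₀ (by positivity)] at this
    linarith
  have hηN : 3 * η * N ≤ 3 * N := mul_le_mul_of_nonneg_right (by linarith only [hη1]) hN0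
  have b_pe0 := hprod p e0 hpn he0
  have b_qe0 := hprod q e0 hqn he0
  have b_se0 := hprod s e0 hsn he0
  have b_se1 := hprod s e1 hsn he1
  have b_pe1 := hprod p e1 hpn he1
  have b_pe2 := hprod p e2 hpn he2
  have b_qe1 := hprod q e1 hqn he1
  have b_qe2 := hprod q e2 hqn he2
  have b_ss : |s ^ 2| ≤ N := by
    rw [abs_of_nonneg (sq_nonneg s), hN]; linarith only [sq_nonneg p, sq_nonneg q]
  have b_pp : |p ^ 2| ≤ N := by
    rw [abs_of_nonneg (sq_nonneg p), hN]; linarith only [sq_nonneg s, sq_nonneg q]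
  have b_qq : |q ^ 2| ≤ N := by
    rw [abs_of_nonneg (sq_nonneg q), hN]; linarith only [sq_nonneg s, sq_nonneg p]
  have b_sp : |s * p| ≤ N := by
    rw [hN]; linarith only [abs_mul_le_sq_add_sq s p, sq_nonneg q]
  have b_sq : |s * q| ≤ N := by
    rw [hN]; linarith only [abs_mul_le_sq_add_sq s q, sq_nonneg p]
  have b_pq : |p * q| ≤ N := by
    rw [hN]; linarith only [abs_mul_le_sq_add_sq p q, sq_nonneg s]
  have hp' : (α₁ ^ 2 + α₂ ^ 2) * p' = α₁ * (-c * p - r * γ1 * s + e1)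
      + α₂ * (-c * q - r * γ2 * s + e2) := by
    rw [← h1, ← h2]; ring
  have hq' : (α₁ ^ 2 + α₂ ^ 2) * q' = α₁ * (-c * q - r * γ2 * s + e2)
      - α₂ * (-c * p - r * γ1 * s + e1) := by
    rw [← h1, ← h2]; ring
  refine ⟨?_, ?_, ?_⟩
  · have hid : c * (s' * (α₁ * p - α₂ * q) + s * (α₁ * p' - α₂ * q'))
          - r * (α₁ ^ 2 + α₂ ^ 2) * (2 * p * p') + k * (2 * s * s')
          - ε * ((α₂ * p + α₁ * q) * (α₂ * p' + α₁ * q'))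
        = (4 * r * c * α₁ * p ^ 2 + c * r * (-γ1) * s ^ 2
          + ε * ((α₂ * p + α₁ * q) * (c * q + r * γ2 * s)))
          + (c * α₁ * (p * e0) - c * α₂ * (q * e0) + c * (s * e1) - 2 * r * α₁ * (p * e1)
            - 2 * r * α₂ * (p * e2) + 2 * k * (s * e0) - ε * α₂ * (p * e2)
            - ε * α₁ * (q * e2)) := by
      rw [h1, h2, hs']
      linear_combination (-2 * r * p) * hp' + s * p * hk4
    rw [hid]
    have j0 := hquad s p q
    have j1 := neg_le_of_abs_le (abs_const_mul_le (k := c * α₁) b_pe0)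
    have j2 := le_of_abs_le (abs_const_mul_le (k := c * α₂) b_qe0)
    have j3 := neg_le_of_abs_le (abs_const_mul_le (k := c) b_se1)
    have j4 := le_of_abs_le (abs_const_mul_le (k := 2 * r * α₁) b_pe1)
    have j5 := le_of_abs_le (abs_const_mul_le (k := 2 * r * α₂) b_pe2)
    have j6 := neg_le_of_abs_le (abs_const_mul_le (k := 2 * k) b_se0)
    have j7 := le_of_abs_le (abs_const_mul_le (k := ε * α₂) b_pe2)
    have j8 := le_of_abs_le (abs_const_mul_le (k := ε * α₁) b_qe2)
    have j9 := mul_le_mul_of_nonneg_right hηδ hN0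
    have j10 : 3 * η * C₁ * N = |c * α₁| * (3 * η * N) + |c * α₂| * (3 * η * N)
      + |c| * (3 * η * N) + |2 * r * α₁| * (3 * η * N) + |2 * r * α₂| * (3 * η * N)
      + |2 * k| * (3 * η * N) + |ε * α₂| * (3 * η * N) + |ε * α₁| * (3 * η * N) := by
      rw [hC₁]; ring
    have j11 : δ / 2 * N = δ * N - δ / 2 * N := by ring
    rw [j11]
    linarith only [j0, j1, j2, j3, j4, j5, j6, j7, j8, j9, j10]
  · have hid : c * (s * (α₁ * p - α₂ * q)) - r * (α₁ ^ 2 + α₂ ^ 2) * p ^ 2 + k * s ^ 2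
        - ε / 2 * (α₂ * p + α₁ * q) ^ 2
        = c * α₁ * (s * p) - c * α₂ * (s * q) - r * (α₁ ^ 2 + α₂ ^ 2) * p ^ 2 + k * s ^ 2
          - ε / 2 * α₂ ^ 2 * p ^ 2 - ε * α₁ * α₂ * (p * q) - ε / 2 * α₁ ^ 2 * q ^ 2 := by ring
    rw [hid]
    have j1 := abs_le.1 (abs_const_mul_le (k := c * α₁) b_sp)
    have j2 := abs_le.1 (abs_const_mul_le (k := c * α₂) b_sq)
    have j3 := abs_le.1 (abs_const_mul_le (k := r * (α₁ ^ 2 + α₂ ^ 2)) b_pp)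
    have j4 := abs_le.1 (abs_const_mul_le (k := k) b_ss)
    have j5 := abs_le.1 (abs_const_mul_le (k := ε / 2 * α₂ ^ 2) b_pp)
    have j6 := abs_le.1 (abs_const_mul_le (k := ε * α₁ * α₂) b_pq)
    have j7 := abs_le.1 (abs_const_mul_le (k := ε / 2 * α₁ ^ 2) b_qq)
    have j8 : 0 ≤ C₃ * N := by positivity
    have j9 : (C₂ + C₃ + 1) * N = |c * α₁| * N + |c * α₂| * N + |r * (α₁ ^ 2 + α₂ ^ 2)| * N
      + |k| * N + |ε / 2 * α₂ ^ 2| * N + |ε * α₁ * α₂| * N + |ε / 2 * α₁ ^ 2| * N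
      + C₃ * N + N := by rw [hC₂]; ring
    rw [j9, abs_le]
    constructor <;> linarith only [j8, hN0, j1.1, j1.2, j2.1, j2.2, j3.1, j3.2, j4.1, j4.2, j5.1, j5.2, j6.1,
      j6.2, j7.1, j7.2]
  · have hid : 2 * s * s' + 2 * p * p' + 2 * q * q' = 4 * r * (s * p) + 2 * (s * e0)
        - 2 * d * α₁ * c * p ^ 2 - 2 * d * α₁ * c * q ^ 2
        - 2 * d * r * (α₁ * γ1 + α₂ * γ2) * (s * p) - 2 * d * r * (α₁ * γ2 - α₂ * γ1) * (s * q)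
        + 2 * d * α₁ * (p * e1) + 2 * d * α₂ * (p * e2)
        + 2 * d * α₁ * (q * e2) - 2 * d * α₂ * (q * e1) := by
      rw [hs']
      linear_combination 2 * p * d * hp' + 2 * q * d * hq' - (2 * p * p' + 2 * q * q') * hdD
    rw [hid]
    have j1 := neg_le_of_abs_le (abs_const_mul_le (k := 4 * r) b_sp)
    have j2 := neg_le_of_abs_le (b_se0.trans hηN)
    have j3 := le_of_abs_le (abs_const_mul_le (k := 2 * d * α₁ * c) b_pp)
    have j4 := le_of_abs_le (abs_const_mul_le (k := 2 * d * α₁ * c) b_qq)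
    have j5 := le_of_abs_le
      (abs_const_mul_le (k := 2 * d * r * (α₁ * γ1 + α₂ * γ2)) b_sp)
    have j6 := le_of_abs_le
      (abs_const_mul_le (k := 2 * d * r * (α₁ * γ2 - α₂ * γ1)) b_sq)
    have j7 := neg_le_of_abs_le (abs_const_mul_le (k := 2 * d * α₁) (b_pe1.trans hηN))
    have j8 := neg_le_of_abs_le (abs_const_mul_le (k := 2 * d * α₂) (b_pe2.trans hηN))
    have j9 := neg_le_of_abs_le (abs_const_mul_le (k := 2 * d * α₁) (b_qe2.trans hηN))
    have j10 := le_of_abs_le (abs_const_mul_le (k := 2 * d * α₂) (b_qe1.trans hηN))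
    have j11 : 0 ≤ C₂ * N := by positivity
    have j12 : C₃ * N = |4 * r| * N + 6 * N + 2 * (|2 * d * α₁ * c| * N)
      + |2 * d * r * (α₁ * γ1 + α₂ * γ2)| * N + |2 * d * r * (α₁ * γ2 - α₂ * γ1)| * N
      + 6 * (|2 * d * α₁| * N) + 6 * (|2 * d * α₂| * N) := by rw [hC₃]; ring
    have j13 : (C₂ + C₃ + 1) * N = C₂ * N + C₃ * N + N := by ring
    rw [j13, j12]
    linarith only [j1, j2, j3, j4, j5, j6, j7, j8, j9, j10, j11, hN0]

/-! ### Limits of derivatives -/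

/-- Barbalat's lemma: a convergent function with bounded second derivative has `f' → 0`. -/
lemma deriv_tendsto_zero (f f' f'' : ℝ → ℝ) (L M : ℝ) (hf : ∀ x, HasDerivAt f (f' x) x)
    (hf' : ∀ x, HasDerivAt f' (f'' x) x) (hM : ∀ x, |f'' x| ≤ M)
    (hL : Tendsto f atTop (𝓝 L)) : Tendsto f' atTop (𝓝 0) := by
  have hM0 : 0 ≤ M := (abs_nonneg _).trans (hM 0)
  rw [Metric.tendsto_nhds]
  intro ε hε
  -- on an interval of length `h` the derivative varies by less than `ε / 2`
  set h := ε / (2 * (M + 1)) with hh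
  have hpos : 0 < h := by positivity
  have hMh : M * h < ε / 2 := by
    have : (M + 1) * h = ε / 2 := by rw [hh]; field_simp
    nlinarith
  have hdiff : Tendsto (fun x => f (x + h) - f x) atTop (𝓝 0) := by
    simpa using (hL.comp (tendsto_atTop_add_const_right atTop h tendsto_id)).sub hL
  filter_upwards [(Metric.tendsto_nhds.1 hdiff) (h * (ε / 2)) (by positivity)] with x hx
  rw [Real.dist_eq, sub_zero] at hx ⊢
  obtain ⟨ξ, hξ, hslope⟩ := exists_hasDerivAt_eq_slope f f' (show x < x + h by linarith)
    (fun y _ => (hf y).continuousAt.continuousWithinAt) (fun y _ => hf y)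
  have h1 : |f' ξ| < ε / 2 := by
    rw [hslope, abs_div, add_sub_cancel_left, abs_of_pos hpos, div_lt_iff₀ hpos]
    linarith
  have h2 : ‖f' ξ - f' x‖ ≤ M * ‖ξ - x‖ :=
    Convex.norm_image_sub_le_of_norm_hasDerivWithin_le (s := Set.univ)
      (fun y _ => (hf' y).hasDerivWithinAt) (fun y _ => hM y) convex_univ trivial trivial
  have h3 : ‖ξ - x‖ ≤ h := by
    rw [Real.norm_eq_abs, abs_of_pos (by linarith [hξ.1])]; linarith [hξ.2]
  have h4 : |f' ξ - f' x| ≤ M * h := h2.trans (mul_le_mul_of_nonneg_left h3 hM0)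
  have h5 := abs_sub_abs_le_abs_sub (f' x) (f' ξ)
  rw [abs_sub_comm] at h5
  linarith

/-- If both `f` and `f'` converge at `+∞`, the limit of `f'` is zero. -/
lemma limit_deriv_eq_zero (f f' : ℝ → ℝ) (L l : ℝ) (hf : ∀ x, HasDerivAt f (f' x) x)
    (hL : Tendsto f atTop (𝓝 L)) (hl : Tendsto f' atTop (𝓝 l)) : l = 0 := by
  have hmv : ∀ x : ℝ, ∃ ξ, x ≤ ξ ∧ f' ξ = f (x + 1) - f x := fun x => by
    obtain ⟨ξ, hξ, hslope⟩ := exists_hasDerivAt_eq_slope f f' (show x < x + 1 by linarith)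
      (fun y _ => (hf y).continuousAt.continuousWithinAt) (fun y _ => hf y)
    exact ⟨ξ, hξ.1.le, by simpa using hslope⟩
  choose ξ hξ hval using hmv
  have h1 : Tendsto (fun x => f' (ξ x)) atTop (𝓝 l) :=
    hl.comp (tendsto_atTop_mono hξ tendsto_id)
  have h2 : Tendsto (fun x => f' (ξ x)) atTop (𝓝 0) := by
    simp_rw [hval]
    simpa using (hL.comp (tendsto_atTop_add_const_right atTop 1 tendsto_id)).sub hL
  exact tendsto_nhds_unique h1 h2

/-! ### Decay at the two rest states, in components -/

/-- Decay towards the rest state `0`, in real components `v = (a, b)`. The Lyapunov function is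
`E = v · A v' + (c / 2) |v|²`, with `E' = α₁ |v'|² - G1 |v|²`. There is no sign condition on `c`,
so the statement applies to the reflected profile. -/
lemma core_zero (α₁ α₂ c γ Γ : ℝ) (hα : 0 < α₁) (hγ : γ < 0) (a b a1 b1 a2 b2 G1 G2 : ℝ → ℝ)
    (ha : ∀ x, HasDerivAt a (a1 x) x) (hb : ∀ x, HasDerivAt b (b1 x) x)
    (ha1 : ∀ x, HasDerivAt a1 (a2 x) x) (hb1 : ∀ x, HasDerivAt b1 (b2 x) x)
    (h1 : ∀ x, α₁ * a2 x - α₂ * b2 x = -c * a1 x - (G1 x * a x - G2 x * b x))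
    (h2 : ∀ x, α₂ * a2 x + α₁ * b2 x = -c * b1 x - (G2 x * a x + G1 x * b x))
    (la : Tendsto a atTop (𝓝 0)) (lb : Tendsto b atTop (𝓝 0))
    (la1 : Tendsto a1 atTop (𝓝 0)) (lb1 : Tendsto b1 atTop (𝓝 0))
    (lG1 : Tendsto G1 atTop (𝓝 γ)) (lG2 : Tendsto G2 atTop (𝓝 Γ)) :
    ∃ X : ℝ, ∃ K > 0, ∃ μ > 0, ∀ x, X ≤ x →
      a x ^ 2 + b x ^ 2 + a1 x ^ 2 + b1 x ^ 2 ≤ K * Real.exp (-μ * x) := by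
  have e1 : ∀ᶠ x in atTop, G1 x < γ / 2 := lG1.eventually_lt_const (by linarith)
  have e2 : ∀ᶠ x in atTop, |G1 x| < |γ| + 1 := lG1.abs.eventually_lt_const (by linarith)
  have e3 : ∀ᶠ x in atTop, |G2 x| < |Γ| + 1 := lG2.abs.eventually_lt_const (by linarith)
  obtain ⟨X, hX⟩ := eventually_atTop.1 (e1.and (e2.and e3))
  have hD : 0 < α₁ ^ 2 + α₂ ^ 2 := by positivity
  set d := (α₁ ^ 2 + α₂ ^ 2)⁻¹ with hd
  have hdD : d * (α₁ ^ 2 + α₂ ^ 2) = 1 := inv_mul_cancel₀ hD.ne'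
  set T := |γ| + |Γ| + 2 with hT
  set C := |α₁| + |α₂| + |c / 2| + 2 + |2 * d * α₁ * c| + 2 * (|2 * d * α₁| * T)
    + 2 * (|2 * d * α₂| * T) with hC
  refine ⟨X, decay_of_lyapunov
    (fun x => a x * (α₁ * a1 x - α₂ * b1 x) + b x * (α₂ * a1 x + α₁ * b1 x)
      + c / 2 * (a x ^ 2 + b x ^ 2))
    (fun x => a x ^ 2 + b x ^ 2 + a1 x ^ 2 + b1 x ^ 2)
    (fun x => α₁ * (a1 x ^ 2 + b1 x ^ 2) - G1 x * (a x ^ 2 + b x ^ 2))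
    (fun x => 2 * (a x * a1 x + b x * b1 x + a1 x * a2 x + b1 x * b2 x))
    X C (min α₁ (-γ / 2)) (lt_min hα (by linarith)) (by positivity) ?_ ?_ ?_ ?_ ?_ ?_⟩
  · intro x _
    have := (((ha x).mul (((ha1 x).const_mul α₁).sub ((hb1 x).const_mul α₂))).add
      ((hb x).mul (((ha1 x).const_mul α₂).add ((hb1 x).const_mul α₁)))).add
      ((((ha x).pow 2).add ((hb x).pow 2)).const_mul (c / 2))
    refine this.congr_deriv ?_
    simp only [Nat.cast_ofNat, Nat.add_one_sub_one, pow_one, Pi.add_apply, Pi.sub_apply]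
    linear_combination a x * h1 x + b x * h2 x
  · intro x _
    have := ((((ha x).pow 2).add ((hb x).pow 2)).add ((ha1 x).pow 2)).add ((hb1 x).pow 2)
    refine this.congr_deriv ?_
    simp only [Nat.cast_ofNat, Nat.add_one_sub_one, pow_one]
    ring
  · intro x hx
    have k1 := mul_le_mul_of_nonneg_right (min_le_left α₁ (-γ / 2))
      (add_nonneg (sq_nonneg (a1 x)) (sq_nonneg (b1 x)))
    have k2 := mul_le_mul_of_nonneg_right
      ((min_le_right α₁ (-γ / 2)).trans (by linarith [(hX x hx).1] : -γ / 2 ≤ - G1 x))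
      (add_nonneg (sq_nonneg (a x)) (sq_nonneg (b x)))
    linarith
  · intro x hx
    set N := a x ^ 2 + b x ^ 2 + a1 x ^ 2 + b1 x ^ 2 with hN
    have hN0 : 0 ≤ N := by positivity
    have y1 : |a x * a1 x + b x * b1 x| ≤ N := by
      refine abs_le.2 ⟨?_, ?_⟩ <;> rw [hN] <;>
      nlinarith only [sq_nonneg (a x + a1 x), sq_nonneg (b x + b1 x), sq_nonneg (a x - a1 x),
        sq_nonneg (b x - b1 x)]
    have y2 : |a x * b1 x - b x * a1 x| ≤ N := by
      refine abs_le.2 ⟨?_, ?_⟩ <;> rw [hN] <;>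
      nlinarith only [sq_nonneg (a x + b1 x), sq_nonneg (b x + a1 x), sq_nonneg (a x - b1 x),
        sq_nonneg (b x - a1 x)]
    have y3 : |a x ^ 2 + b x ^ 2| ≤ N := by
      rw [abs_of_nonneg (by positivity), hN]
      linarith only [sq_nonneg (a1 x), sq_nonneg (b1 x)]
    have j1 := abs_le.1 (abs_const_mul_le (k := α₁) y1)
    have j2 := abs_le.1 (abs_const_mul_le (k := α₂) y2)
    have j3 := abs_le.1 (abs_const_mul_le (k := c / 2) y3)
    have j4 : C * N = |α₁| * N + |α₂| * N + |c / 2| * N + (2 + |2 * d * α₁ * c|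
      + 2 * (|2 * d * α₁| * T) + 2 * (|2 * d * α₂| * T)) * N := by rw [hC]; ring
    have j5 : 0 ≤ (2 + |2 * d * α₁ * c|
      + 2 * (|2 * d * α₁| * T) + 2 * (|2 * d * α₂| * T)) * N := by positivity
    rw [j4, abs_le]
    constructor <;> linarith only [j1.1, j1.2, j2.1, j2.2, j3.1, j3.2, j5]
  · intro x hx
    set N := a x ^ 2 + b x ^ 2 + a1 x ^ 2 + b1 x ^ 2 with hN
    have hN0 : 0 ≤ N := by positivity
    have y1 : |a x * a1 x + b x * b1 x| ≤ N := by
      refine abs_le.2 ⟨?_, ?_⟩ <;> rw [hN] <;>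
      nlinarith only [sq_nonneg (a x + a1 x), sq_nonneg (b x + b1 x), sq_nonneg (a x - a1 x),
        sq_nonneg (b x - b1 x)]
    have y2 : |a x * b1 x - b x * a1 x| ≤ N := by
      refine abs_le.2 ⟨?_, ?_⟩ <;> rw [hN] <;>
      nlinarith only [sq_nonneg (a x + b1 x), sq_nonneg (b x + a1 x), sq_nonneg (a x - b1 x),
        sq_nonneg (b x - a1 x)]
    have y3 : |a1 x ^ 2 + b1 x ^ 2| ≤ N := by
      rw [abs_of_nonneg (by positivity), hN]
      linarith only [sq_nonneg (a x), sq_nonneg (b x)]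
    have t1 : |G1 x| ≤ T := by
      have := (hX x hx).2.1
      have := abs_nonneg Γ
      rw [hT]; linarith
    have t2 : |G2 x| ≤ T := by
      have := (hX x hx).2.2
      have := abs_nonneg γ
      rw [hT]; linarith
    have hG : ∀ g y : ℝ, |g| ≤ T → |y| ≤ N → |g * y| ≤ T * N := fun g y hg hy => by
      rw [abs_mul]; exact mul_le_mul hg hy (abs_nonneg _) (by positivity)
    have hid : 2 * (a x * a1 x + b x * b1 x + a1 x * a2 x + b1 x * b2 x)
        = 2 * (a x * a1 x + b x * b1 x) - 2 * d * α₁ * c * (a1 x ^ 2 + b1 x ^ 2)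
          - 2 * d * α₁ * (G1 x * (a x * a1 x + b x * b1 x))
          - 2 * d * α₁ * (G2 x * (a x * b1 x - b x * a1 x))
          - 2 * d * α₂ * (G2 x * (a x * a1 x + b x * b1 x))
          + 2 * d * α₂ * (G1 x * (a x * b1 x - b x * a1 x)) := by
      linear_combination (2 * d * (α₁ * a1 x - α₂ * b1 x)) * h1 x
        + (2 * d * (α₂ * a1 x + α₁ * b1 x)) * h2 x
        - (2 * a1 x * a2 x + 2 * b1 x * b2 x) * hdD
    rw [hid]
    have j1 := abs_le.1 y1
    have j2 := abs_le.1 (abs_const_mul_le (k := 2 * d * α₁ * c) y3)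
    have j3 := abs_le.1 (abs_const_mul_le (k := 2 * d * α₁) (hG _ _ t1 y1))
    have j4 := abs_le.1 (abs_const_mul_le (k := 2 * d * α₁) (hG _ _ t2 y2))
    have j5 := abs_le.1 (abs_const_mul_le (k := 2 * d * α₂) (hG _ _ t2 y1))
    have j6 := abs_le.1 (abs_const_mul_le (k := 2 * d * α₂) (hG _ _ t1 y2))
    have j7 : C * N = (|α₁| + |α₂| + |c / 2|) * N + 2 * N + |2 * d * α₁ * c| * N
      + 2 * (|2 * d * α₁| * (T * N)) + 2 * (|2 * d * α₂| * (T * N)) := by rw [hC]; ring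
    have j8 : 0 ≤ (|α₁| + |α₂| + |c / 2|) * N := by positivity
    rw [j7]
    linarith only [j1.1, j2.2, j3.2, j4.2, j5.2, j6.1, j8]
  · simpa using (((la.pow 2).add (lb.pow 2)).add (la1.pow 2)).add (lb1.pow 2)

/-- Decay of `|v|² - r²` and `v'` when `v = (a, b)` tends to `(r, 0)`. The functions `θ1, θ2` are
the difference quotients of `g₁, g₂` at `r²`, so that `g₁(|v|²) = (|v|² - r²) θ1`, and similarly
for `ω + g₂`. -/
lemma core_plus (α₁ α₂ c r γ1 γ2 : ℝ) (hα : 0 < α₁) (hc : 0 < c) (hr : 0 < r) (hγ : γ1 < 0)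
    (a b a1 b1 a2 b2 θ1 θ2 : ℝ → ℝ)
    (ha : ∀ x, HasDerivAt a (a1 x) x) (hb : ∀ x, HasDerivAt b (b1 x) x)
    (ha1 : ∀ x, HasDerivAt a1 (a2 x) x) (hb1 : ∀ x, HasDerivAt b1 (b2 x) x)
    (h1 : ∀ x, α₁ * a2 x - α₂ * b2 x = -c * a1 x
      - (a x ^ 2 + b x ^ 2 - r ^ 2) * (θ1 x * a x - θ2 x * b x))
    (h2 : ∀ x, α₂ * a2 x + α₁ * b2 x = -c * b1 x
      - (a x ^ 2 + b x ^ 2 - r ^ 2) * (θ2 x * a x + θ1 x * b x))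
    (la : Tendsto a atTop (𝓝 r)) (lb : Tendsto b atTop (𝓝 0))
    (la1 : Tendsto a1 atTop (𝓝 0)) (lb1 : Tendsto b1 atTop (𝓝 0))
    (lθ1 : Tendsto θ1 atTop (𝓝 γ1)) (lθ2 : Tendsto θ2 atTop (𝓝 γ2)) :
    ∃ X : ℝ, ∃ K > 0, ∃ μ > 0, ∀ x, X ≤ x →
      (a x ^ 2 + b x ^ 2 - r ^ 2) ^ 2 + a1 x ^ 2 + b1 x ^ 2 ≤ K * Real.exp (-μ * x) := by
  obtain ⟨ε, k, δ, hδ, C, hC, η, hη, halg⟩ := alg_plus α₁ α₂ c r γ1 γ2 hα hc hr hγ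
  have e1 : ∀ᶠ x in atTop, |2 * (a x - r)| < η := by
    have : Tendsto (fun x => |2 * (a x - r)|) atTop (𝓝 0) := by
      simpa using ((la.sub_const r).const_mul 2).abs
    exact this.eventually_lt_const hη
  have e2 : ∀ᶠ x in atTop, |2 * b x| < η := by
    have : Tendsto (fun x => |2 * b x|) atTop (𝓝 0) := by simpa using (lb.const_mul 2).abs
    exact this.eventually_lt_const hη
  have e3 : ∀ᶠ x in atTop, |r * γ1 - (θ1 x * a x - θ2 x * b x)| < η := by
    have : Tendsto (fun x => |r * γ1 - (θ1 x * a x - θ2 x * b x)|) atTop (𝓝 0) := by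
      have := (((lθ1.mul la).sub (lθ2.mul lb)).const_sub (r * γ1)).abs
      simpa [mul_comm] using this
    exact this.eventually_lt_const hη
  have e4 : ∀ᶠ x in atTop, |r * γ2 - (θ2 x * a x + θ1 x * b x)| < η := by
    have : Tendsto (fun x => |r * γ2 - (θ2 x * a x + θ1 x * b x)|) atTop (𝓝 0) := by
      have := (((lθ2.mul la).add (lθ1.mul lb)).const_sub (r * γ2)).abs
      simpa [mul_comm] using this
    exact this.eventually_lt_const hη
  obtain ⟨X, hX⟩ := eventually_atTop.1 (e1.and (e2.and (e3.and e4)))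
  have hs : ∀ x, HasDerivAt (fun x => a x ^ 2 + b x ^ 2 - r ^ 2)
      (2 * (a x * a1 x + b x * b1 x)) x := fun x => by
    refine ((((ha x).pow 2).add ((hb x).pow 2)).sub_const (r ^ 2)).congr_deriv ?_
    simp only [Nat.cast_ofNat, Nat.add_one_sub_one, pow_one]
    ring
  set s : ℝ → ℝ := fun x => a x ^ 2 + b x ^ 2 - r ^ 2 with hsdef
  have main : ∀ x, X ≤ x → _ := fun x hx => by
    obtain ⟨u1, u2, u3, u4⟩ := hX x hx
    have hn : 0 ≤ |s x| + |a1 x| + |b1 x| := by positivity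
    refine halg (s x) (a1 x) (b1 x) (2 * (a x * a1 x + b x * b1 x)) (a2 x) (b2 x)
      (2 * (a x - r) * a1 x + 2 * b x * b1 x)
      ((r * γ1 - (θ1 x * a x - θ2 x * b x)) * s x)
      ((r * γ2 - (θ2 x * a x + θ1 x * b x)) * s x) ?_ ?_ ?_ ?_ ?_ ?_
    · refine (abs_add_le _ _).trans ?_
      rw [abs_mul _ (a1 x), abs_mul _ (b1 x)]
      have v1 := mul_le_mul_of_nonneg_right u1.le (abs_nonneg (a1 x))
      have v2 := mul_le_mul_of_nonneg_right u2.le (abs_nonneg (b1 x))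
      have v3 := mul_nonneg hη.le (abs_nonneg (s x))
      linarith only [v1, v2, v3]
    · rw [abs_mul]
      refine mul_le_mul u3.le ?_ (abs_nonneg _) hη.le
      linarith only [abs_nonneg (a1 x), abs_nonneg (b1 x)]
    · rw [abs_mul]
      refine mul_le_mul u4.le ?_ (abs_nonneg _) hη.le
      linarith only [abs_nonneg (a1 x), abs_nonneg (b1 x)]
    · ring
    · rw [h1 x]; ring
    · rw [h2 x]; ring
  refine ⟨X, decay_of_lyapunov
    (fun x => c * (s x * (α₁ * a1 x - α₂ * b1 x)) - r * (α₁ ^ 2 + α₂ ^ 2) * a1 x ^ 2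
      + k * s x ^ 2 - ε / 2 * (α₂ * a1 x + α₁ * b1 x) ^ 2)
    (fun x => s x ^ 2 + a1 x ^ 2 + b1 x ^ 2) _ _
    X C δ hδ hC ?_ ?_ (fun x hx => (main x hx).1) (fun x hx => (main x hx).2.1)
      (fun x hx => (main x hx).2.2) ?_⟩
  · intro x _
    have := (((((hs x).mul (((ha1 x).const_mul α₁).sub ((hb1 x).const_mul α₂))).const_mul c).sub
      (((ha1 x).pow 2).const_mul (r * (α₁ ^ 2 + α₂ ^ 2)))).add
      (((hs x).pow 2).const_mul k)).sub
      (((((ha1 x).const_mul α₂).add ((hb1 x).const_mul α₁)).pow 2).const_mul (ε / 2))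
    refine this.congr_deriv ?_
    simp only [Nat.cast_ofNat, Nat.add_one_sub_one, pow_one, Pi.add_apply, Pi.sub_apply]
    ring
  · intro x _
    have := (((hs x).pow 2).add ((ha1 x).pow 2)).add ((hb1 x).pow 2)
    refine this.congr_deriv ?_
    simp only [Nat.cast_ofNat, Nat.add_one_sub_one, pow_one]
  · have ls : Tendsto s atTop (𝓝 0) := by
      have := ((la.pow 2).add (lb.pow 2)).sub_const (r ^ 2)
      rwa [show r ^ 2 + 0 ^ 2 - r ^ 2 = 0 by ring] at this
    simpa using ((ls.pow 2).add (la1.pow 2)).add (lb1.pow 2)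

/-! ### From the derivative to the profile -/

/-- Integrating an exponential bound on the derivative from `x` to `+∞` bounds the distance to the
limit. -/
lemma tail_bound (a a1 : ℝ → ℝ) (r K μ X : ℝ) (hμ : 0 < μ) (ha : ∀ x, HasDerivAt a (a1 x) x)
    (la : Tendsto a atTop (𝓝 r)) (h : ∀ x, X ≤ x → |a1 x| ≤ K * Real.exp (-μ * x)) :
    ∀ x, X ≤ x → |a x - r| ≤ K / μ * Real.exp (-μ * x) := by
  have hexp : ∀ x : ℝ, HasDerivAt (fun x => K / μ * Real.exp (-μ * x))
      (-(K * Real.exp (-μ * x))) x := fun x => by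
    have h1 : HasDerivAt (fun x : ℝ => -μ * x) (-μ) x := by
      simpa using (hasDerivAt_id x).const_mul (-μ)
    refine (h1.exp.const_mul (K / μ)).congr_deriv ?_
    field_simp
  have lexp : Tendsto (fun x => K / μ * Real.exp (-μ * x)) atTop (𝓝 0) := by
    have h1 : Tendsto (fun x : ℝ => -μ * x) atTop atBot :=
      tendsto_id.const_mul_atTop_of_neg (by linarith)
    simpa using (Real.tendsto_exp_atBot.comp h1).const_mul (K / μ)
  have hm : MonotoneOn (fun x => a x - K / μ * Real.exp (-μ * x)) (Set.Ici X) := by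
    refine monotoneOn_of_hasDerivWithinAt_nonneg (convex_Ici X)
      (fun x hx => ((ha x).sub (hexp x)).continuousAt.continuousWithinAt)
      (fun x hx => ((ha x).sub (hexp x)).hasDerivWithinAt) ?_
    intro x hx
    have := neg_le_of_abs_le (h x (interior_subset hx))
    linarith
  have hm2 : AntitoneOn (fun x => a x + K / μ * Real.exp (-μ * x)) (Set.Ici X) := by
    refine antitoneOn_of_hasDerivWithinAt_nonpos (convex_Ici X)
      (fun x hx => ((ha x).add (hexp x)).continuousAt.continuousWithinAt)
      (fun x hx => ((ha x).add (hexp x)).hasDerivWithinAt) ?_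
    intro x hx
    have := le_of_abs_le (h x (interior_subset hx))
    linarith
  intro x hx
  have l1 : Tendsto (fun x => a x - K / μ * Real.exp (-μ * x)) atTop (𝓝 r) := by
    simpa using la.sub lexp
  have l2 : Tendsto (fun x => a x + K / μ * Real.exp (-μ * x)) atTop (𝓝 r) := by
    simpa using la.add lexp
  have b1 := ge_of_tendsto l1 (b := a x - K / μ * Real.exp (-μ * x)) (by
    filter_upwards [eventually_ge_atTop x] with y hy
    exact hm hx (hx.trans hy) hy)
  have b2 := le_of_tendsto l2 (b := a x + K / μ * Real.exp (-μ * x)) (by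
    filter_upwards [eventually_ge_atTop x] with y hy
    exact hm2 hx (hx.trans hy) hy)
  rw [abs_le]
  constructor <;> linarith

lemma abs_le_sqrt_exp {y K μ x : ℝ} (hK : 0 < K) (h : y ^ 2 ≤ K * Real.exp (-μ * x)) :
    |y| ≤ √K * Real.exp (-(μ / 2) * x) := by
  refine abs_le_of_sq_le_sq (h.trans_eq ?_) (by positivity)
  rw [mul_pow, Real.sq_sqrt hK.le, ← Real.exp_nat_mul]
  congr 2
  push_cast
  ring

lemma decay_from_derivs (a b a1 b1 : ℝ → ℝ) (r t : ℝ)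
    (ha : ∀ x, HasDerivAt a (a1 x) x) (hb : ∀ x, HasDerivAt b (b1 x) x)
    (la : Tendsto a atTop (𝓝 r)) (lb : Tendsto b atTop (𝓝 t))
    (h : ∃ X : ℝ, ∃ K > 0, ∃ μ > 0, ∀ x, X ≤ x → a1 x ^ 2 + b1 x ^ 2 ≤ K * Real.exp (-μ * x)) :
    ∃ X : ℝ, ∃ K > 0, ∃ μ > 0, ∀ x, X ≤ x →
      |a x - r| + |b x - t| + |a1 x| + |b1 x| ≤ K * Real.exp (-μ * x) := by
  obtain ⟨X, K, hK, μ, hμ, h⟩ := h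
  have h1 : ∀ x, X ≤ x → |a1 x| ≤ √K * Real.exp (-(μ / 2) * x) := fun x hx =>
    abs_le_sqrt_exp hK (by linarith [h x hx, sq_nonneg (b1 x)])
  have h2 : ∀ x, X ≤ x → |b1 x| ≤ √K * Real.exp (-(μ / 2) * x) := fun x hx =>
    abs_le_sqrt_exp hK (by linarith [h x hx, sq_nonneg (a1 x)])
  have h3 := tail_bound a a1 r (√K) (μ / 2) X (by positivity) ha la h1
  have h4 := tail_bound b b1 t (√K) (μ / 2) X (by positivity) hb lb h2
  refine ⟨X, 2 * (√K / (μ / 2)) + 2 * √K, by positivity, μ / 2, by positivity, fun x hx => ?_⟩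
  linarith [h1 x hx, h2 x hx, h3 x hx, h4 x hx]

/-! ### Application to the profile equation -/

/-- The profile equation in components, solved for `A v''`. -/
lemma profile_components {α₁ α₂ c ω : ℝ} {g₁ g₂ : ℝ → ℝ} {v : ℝ → Fin 2 → ℝ}
    (h : ProfileEq α₁ α₂ c ω g₁ g₂ v) (x : ℝ) :
    (α₁ * deriv (deriv v) x 0 - α₂ * deriv (deriv v) x 1 = -c * deriv v x 0
      - (g₁ (v x 0 ^ 2 + v x 1 ^ 2) * v x 0 - (ω + g₂ (v x 0 ^ 2 + v x 1 ^ 2)) * v x 1)) ∧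
    (α₂ * deriv (deriv v) x 0 + α₁ * deriv (deriv v) x 1 = -c * deriv v x 1
      - ((ω + g₂ (v x 0 ^ 2 + v x 1 ^ 2)) * v x 0 + g₁ (v x 0 ^ 2 + v x 1 ^ 2) * v x 1)) := by
  have h0 := congrFun (h x) 0
  have h1 := congrFun (h x) 1
  simp [Amat, Smat, fnl, gmat, sq2, Matrix.vecHead, Matrix.vecTail] at h0 h1
  constructor <;> linarith

lemma vec_norm_le (u : Fin 2 → ℝ) : ‖u‖ ≤ |u 0| + |u 1| := by
  rw [pi_norm_le_iff_of_nonneg (by positivity)]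
  intro i
  fin_cases i
  · simp
  · simp

lemma hasDerivAt_components {v : ℝ → Fin 2 → ℝ} (h : ContDiff ℝ 2 v) (x : ℝ) (i : Fin 2) :
    HasDerivAt (fun x => v x i) (deriv v x i) x ∧
    HasDerivAt (fun x => deriv v x i) (deriv (deriv v) x i) x := by
  have h2 : ContDiff ℝ ((1 : WithTop ℕ∞) + 1) v := by rw [one_add_one_eq_two]; exact h
  have h3 := contDiff_succ_iff_deriv.1 h2
  exact ⟨hasDerivAt_pi.1 (h3.1 x).hasDerivAt i,
    hasDerivAt_pi.1 ((h3.2.2.differentiable one_ne_zero) x).hasDerivAt i⟩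

/-- The limit `v∞ = (r, 0)` is a rest state of the profile equation: `A v''` converges and `A v'`
tends to zero, so the limit of `A v''`, which is `-(S_ω v∞ + f(v∞))`, vanishes. -/
lemma equilibrium {α₁ α₂ c ω r M : ℝ} {g₁ g₂ : ℝ → ℝ} {v : ℝ → Fin 2 → ℝ}
    (hg₁ : Continuous g₁) (hg₂ : Continuous g₂) (hv : ContDiff ℝ 2 v)
    (hM : ∀ x, ‖deriv (deriv v) x‖ ≤ M)
    (h : ProfileEq α₁ α₂ c ω g₁ g₂ v)
    (la : Tendsto (fun x => v x 0) atTop (𝓝 r)) (lb : Tendsto (fun x => v x 1) atTop (𝓝 0))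
    (hr : 0 < r) : g₁ (r ^ 2) = 0 ∧ ω + g₂ (r ^ 2) = 0 := by
  have lw : ∀ i, Tendsto (fun x => v x i) atTop (𝓝 (if i = 0 then r else 0)) := by
    intro i; fin_cases i
    · simpa using la
    · simpa using lb
  have lw1 : ∀ i, Tendsto (fun x => deriv v x i) atTop (𝓝 0) := fun i =>
    deriv_tendsto_zero _ _ _ _ M (fun x => (hasDerivAt_components hv x i).1)
      (fun x => (hasDerivAt_components hv x i).2)
      (fun x => (norm_le_pi_norm (deriv (deriv v) x) i).trans (hM x)) (lw i)
  have ls : Tendsto (fun x => v x 0 ^ 2 + v x 1 ^ 2) atTop (𝓝 (r ^ 2)) := by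
    simpa using (la.pow 2).add (lb.pow 2)
  have lG1 := (hg₁.tendsto _).comp ls
  have lG2 := ((hg₂.tendsto _).comp ls).const_add ω
  constructor
  · have := limit_deriv_eq_zero (fun x => α₁ * deriv v x 0 - α₂ * deriv v x 1) _ _
      (-c * 0 - (g₁ (r ^ 2) * r - (ω + g₂ (r ^ 2)) * 0))
      (fun x => ((hasDerivAt_components hv x 0).2.const_mul α₁).sub
        ((hasDerivAt_components hv x 1).2.const_mul α₂))
      (((lw1 0).const_mul α₁).sub ((lw1 1).const_mul α₂)) (by
        simp_rw [fun x => (profile_components h x).1]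
        exact ((lw1 0).const_mul (-c)).sub ((lG1.mul la).sub (lG2.mul lb)))
    have h0 : g₁ (r ^ 2) * r = 0 := by linarith
    exact (mul_eq_zero.1 h0).resolve_right hr.ne'
  · have := limit_deriv_eq_zero (fun x => α₂ * deriv v x 0 + α₁ * deriv v x 1) _ _
      (-c * 0 - ((ω + g₂ (r ^ 2)) * r + g₁ (r ^ 2) * 0))
      (fun x => ((hasDerivAt_components hv x 0).2.const_mul α₂).add
        ((hasDerivAt_components hv x 1).2.const_mul α₁))
      (((lw1 0).const_mul α₂).add ((lw1 1).const_mul α₁)) (by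
        simp_rw [fun x => (profile_components h x).2]
        exact ((lw1 1).const_mul (-c)).sub ((lG2.mul la).add (lG1.mul lb)))
    have h0 : (ω + g₂ (r ^ 2)) * r = 0 := by linarith
    exact (mul_eq_zero.1 h0).resolve_right hr.ne'

lemma decay_plus {α₁ α₂ c ω r M : ℝ} {g₁ g₂ : ℝ → ℝ} {v : ℝ → Fin 2 → ℝ}
    (hα : 0 < α₁) (hc : 0 < c)
    (hg₁ : Differentiable ℝ g₁) (hg₂ : Differentiable ℝ g₂) (hv : ContDiff ℝ 2 v)
    (hM : ∀ x, ‖deriv (deriv v) x‖ ≤ M)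
    (h : ProfileEq α₁ α₂ c ω g₁ g₂ v)
    (la : Tendsto (fun x => v x 0) atTop (𝓝 r)) (lb : Tendsto (fun x => v x 1) atTop (𝓝 0))
    (hr : 0 < r) (hγ : deriv g₁ (r ^ 2) < 0) :
    ∃ X : ℝ, ∃ K > 0, ∃ μ > 0, ∀ x, X ≤ x →
      |v x 0 - r| + |v x 1 - 0| + |deriv v x 0| + |deriv v x 1| ≤ K * Real.exp (-μ * x) := by
  obtain ⟨q1, q2⟩ := equilibrium hg₁.continuous hg₂.continuous hv hM h la lb hr
  have d0 := fun x => hasDerivAt_components hv x 0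
  have d1 := fun x => hasDerivAt_components hv x 1
  have la1 : Tendsto (fun x => deriv v x 0) atTop (𝓝 0) :=
    deriv_tendsto_zero _ _ _ _ M (fun x => (d0 x).1) (fun x => (d0 x).2)
      (fun x => (norm_le_pi_norm (deriv (deriv v) x) 0).trans (hM x)) la
  have lb1 : Tendsto (fun x => deriv v x 1) atTop (𝓝 0) :=
    deriv_tendsto_zero _ _ _ _ M (fun x => (d1 x).1) (fun x => (d1 x).2)
      (fun x => (norm_le_pi_norm (deriv (deriv v) x) 1).trans (hM x)) lb
  have ls : Tendsto (fun x => v x 0 ^ 2 + v x 1 ^ 2) atTop (𝓝 (r ^ 2)) := by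
    simpa using (la.pow 2).add (lb.pow 2)
  have sl : ∀ g : ℝ → ℝ, ∀ y : ℝ, g y = g (r ^ 2) + (y - r ^ 2) * dslope g (r ^ 2) y :=
    fun g y => by
      have := sub_smul_dslope g (r ^ 2) y
      rw [smul_eq_mul] at this
      linarith
  have lθ : ∀ g : ℝ → ℝ, Differentiable ℝ g → Tendsto
      (fun x => dslope g (r ^ 2) (v x 0 ^ 2 + v x 1 ^ 2)) atTop (𝓝 (deriv g (r ^ 2))) := by
    intro g hg
    have := (continuousAt_dslope_same.2 (hg (r ^ 2))).tendsto
    rw [dslope_same] at this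
    exact this.comp ls
  refine decay_from_derivs _ _ _ _ _ _ (fun x => (d0 x).1) (fun x => (d1 x).1) la lb ?_
  obtain ⟨X, K, hK, μ, hμ, hN⟩ := core_plus α₁ α₂ c r (deriv g₁ (r ^ 2)) (deriv g₂ (r ^ 2))
    hα hc hr hγ (fun x => v x 0) (fun x => v x 1) (fun x => deriv v x 0) (fun x => deriv v x 1)
    (fun x => deriv (deriv v) x 0) (fun x => deriv (deriv v) x 1) _ _
    (fun x => (d0 x).1) (fun x => (d1 x).1) (fun x => (d0 x).2) (fun x => (d1 x).2)
    (fun x => by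
      rw [(profile_components h x).1, sl g₁ (v x 0 ^ 2 + v x 1 ^ 2),
        sl g₂ (v x 0 ^ 2 + v x 1 ^ 2), q1]
      linear_combination (v x 1) * q2)
    (fun x => by
      rw [(profile_components h x).2, sl g₁ (v x 0 ^ 2 + v x 1 ^ 2),
        sl g₂ (v x 0 ^ 2 + v x 1 ^ 2), q1]
      linear_combination (-v x 0) * q2)
    la lb la1 lb1 (lθ g₁ hg₁) (lθ g₂ hg₂)
  exact ⟨X, K, hK, μ, hμ, fun x hx => by
    have := hN x hx
    have h0 := sq_nonneg (v x 0 ^ 2 + v x 1 ^ 2 - r ^ 2)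
    linarith⟩

/-- Decay at `-∞`, stated for the reflected profile `x ↦ v (-x)`, which solves the equation with
speed `-c`. -/
lemma decay_minus {α₁ α₂ c ω M : ℝ} {g₁ g₂ : ℝ → ℝ} {v : ℝ → Fin 2 → ℝ}
    (hα : 0 < α₁) (hg₁ : Continuous g₁) (hg₂ : Continuous g₂) (hv : ContDiff ℝ 2 v)
    (hM : ∀ x, ‖deriv (deriv v) x‖ ≤ M)
    (h : ProfileEq α₁ α₂ c ω g₁ g₂ v)
    (la : Tendsto (fun x => v x 0) atBot (𝓝 0)) (lb : Tendsto (fun x => v x 1) atBot (𝓝 0))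
    (hγ : g₁ 0 < 0) :
    ∃ X : ℝ, ∃ K > 0, ∃ μ > 0, ∀ x, X ≤ x →
      |v (-x) 0 - 0| + |v (-x) 1 - 0| + |-deriv v (-x) 0| + |-deriv v (-x) 1|
        ≤ K * Real.exp (-μ * x) := by
  have d : ∀ i x, HasDerivAt (fun x => v (-x) i) (-deriv v (-x) i) x := fun i x => by
    simpa [Function.comp_def] using
      (hasDerivAt_components hv (-x) i).1.scomp x (hasDerivAt_neg x)
  have d' : ∀ i x, HasDerivAt (fun x => -deriv v (-x) i) (deriv (deriv v) (-x) i) x :=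
    fun i x => by
      refine ((hasDerivAt_components hv (-x) i).2.scomp x (hasDerivAt_neg x)).neg.congr_deriv ?_
      simp
  have la' : Tendsto (fun x => v (-x) 0) atTop (𝓝 0) := la.comp tendsto_neg_atTop_atBot
  have lb' : Tendsto (fun x => v (-x) 1) atTop (𝓝 0) := lb.comp tendsto_neg_atTop_atBot
  have la1 : Tendsto (fun x => -deriv v (-x) 0) atTop (𝓝 0) :=
    deriv_tendsto_zero _ _ _ _ M (d 0) (d' 0)
      (fun x => (norm_le_pi_norm (deriv (deriv v) (-x)) 0).trans (hM (-x))) la'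
  have lb1 : Tendsto (fun x => -deriv v (-x) 1) atTop (𝓝 0) :=
    deriv_tendsto_zero _ _ _ _ M (d 1) (d' 1)
      (fun x => (norm_le_pi_norm (deriv (deriv v) (-x)) 1).trans (hM (-x))) lb'
  have ls : Tendsto (fun x => v (-x) 0 ^ 2 + v (-x) 1 ^ 2) atTop (𝓝 0) := by
    simpa using (la'.pow 2).add (lb'.pow 2)
  refine decay_from_derivs _ _ _ _ _ _ (d 0) (d 1) la' lb' ?_
  obtain ⟨X, K, hK, μ, hμ, hN⟩ := core_zero α₁ α₂ (-c) (g₁ 0) (ω + g₂ 0) hα hγ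
    (fun x => v (-x) 0) (fun x => v (-x) 1) _ _ _ _
    (fun x => g₁ (v (-x) 0 ^ 2 + v (-x) 1 ^ 2)) (fun x => ω + g₂ (v (-x) 0 ^ 2 + v (-x) 1 ^ 2))
    (d 0) (d 1) (d' 0) (d' 1)
    (fun x => by rw [(profile_components h (-x)).1]; ring)
    (fun x => by rw [(profile_components h (-x)).2]; ring)
    la' lb' la1 lb1 ((hg₁.tendsto _).comp ls) (((hg₂.tendsto _).comp ls).const_add ω)
  exact ⟨X, K, hK, μ, hμ, fun x hx => by
    have := hN x hx
    have h0 := sq_nonneg (v (-x) 0)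
    have h1 := sq_nonneg (v (-x) 1)
    linarith⟩

/-- A bounded function that decays exponentially from some point on does so on all of `[0, ∞)`,
with the same rate. -/
lemma extend_decay (f : ℝ → ℝ) (M : ℝ) (hM : ∀ x, f x ≤ M)
    (h : ∃ X : ℝ, ∃ K > 0, ∃ μ > 0, ∀ x, X ≤ x → f x ≤ K * Real.exp (-μ * x)) :
    ∃ K > 0, ∃ μ > 0, ∀ x, 0 ≤ x → f x ≤ K * Real.exp (-μ * x) := by
  obtain ⟨X, K, hK, μ, hμ, h⟩ := h
  refine ⟨K + |M| * Real.exp (μ * X), by positivity, μ, hμ, fun x hx => ?_⟩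
  rcases le_total X x with hx' | hx'
  · refine (h x hx').trans ?_
    have : 0 ≤ |M| * Real.exp (μ * X) * Real.exp (-μ * x) := by positivity
    linarith
  · have h1 : 1 ≤ Real.exp (μ * X) * Real.exp (-μ * x) := by
      rw [← Real.exp_add]
      exact Real.one_le_exp (by nlinarith)
    have h2 : 0 ≤ K * Real.exp (-μ * x) := by positivity
    have h3 := mul_le_mul_of_nonneg_left h1 (abs_nonneg M)
    linarith [hM x, le_abs_self M]

/-! ### Regularity and bounds on higher derivatives -/

/-- Since `A` is invertible, the profile equation reads `v'' = B v' + H(v)` with `H` of class `C³`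
and `H` vanishing at rest states. -/
lemma explicit_form (α₁ α₂ c ω : ℝ) (g₁ g₂ : ℝ → ℝ) (hα : 0 < α₁)
    (hg₁ : ContDiff ℝ 3 g₁) (hg₂ : ContDiff ℝ 3 g₂) :
    ∃ B : (Fin 2 → ℝ) →L[ℝ] (Fin 2 → ℝ), ∃ H : (Fin 2 → ℝ) → (Fin 2 → ℝ), ContDiff ℝ 3 H ∧
      (∀ v, ProfileEq α₁ α₂ c ω g₁ g₂ v →
        deriv (deriv v) = fun x => B (deriv v x) + H (v x)) ∧
      (∀ p, (Smat ω).mulVec p + fnl g₁ g₂ p = 0 → H p = 0) := by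
  have hD : 0 < α₁ ^ 2 + α₂ ^ 2 := by positivity
  set J : Matrix (Fin 2) (Fin 2) ℝ := (α₁ ^ 2 + α₂ ^ 2)⁻¹ • !![α₁, α₂; -α₂, α₁] with hJ
  have hJA : J * Amat α₁ α₂ = 1 := by
    ext i j
    fin_cases i <;> fin_cases j <;>
      simp [hJ, Amat, Matrix.mul_apply, Fin.sum_univ_two] <;> field_simp <;> ring
  set B₀ : (Fin 2 → ℝ) →L[ℝ] (Fin 2 → ℝ) := LinearMap.toContinuousLinearMap (Matrix.toLin' J)
    with hB₀
  have hB₀J : ∀ u, B₀ u = J.mulVec u := fun u => rfl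
  have hF : ContDiff ℝ 3 (fun p => (Smat ω).mulVec p + fnl g₁ g₂ p) := by
    have hs : ContDiff ℝ 3 (fun p : Fin 2 → ℝ => p 0 ^ 2 + p 1 ^ 2) := by fun_prop
    have h1 := hg₁.comp hs
    have h2 := hg₂.comp hs
    have p0 : ContDiff ℝ 3 (fun p : Fin 2 → ℝ => p 0) := by fun_prop
    have p1 : ContDiff ℝ 3 (fun p : Fin 2 → ℝ => p 1) := by fun_prop
    rw [contDiff_pi]
    intro i
    fin_cases i
    · simp [Smat, fnl, gmat, sq2, dotProduct, Fin.sum_univ_two]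
      exact (contDiff_const.mul p1).neg.add ((h1.mul p0).add (h2.mul p1).neg)
    · simp [Smat, fnl, gmat, sq2, dotProduct, Fin.sum_univ_two]
      exact (contDiff_const.mul p0).add ((h2.mul p0).add (h1.mul p1))
  refine ⟨(-c) • B₀, fun p => -B₀ ((Smat ω).mulVec p + fnl g₁ g₂ p),
    (B₀.contDiff.comp hF).neg, ?_, ?_⟩
  · intro v hv
    funext x
    have h1 : (Amat α₁ α₂).mulVec (deriv (deriv v) x)
        = (-c) • deriv v x - ((Smat ω).mulVec (v x) + fnl g₁ g₂ (v x)) := by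
      have := hv x
      rw [add_assoc] at this
      rw [neg_smul, ← sub_eq_zero, ← this]
      abel
    have h2 : B₀ ((Amat α₁ α₂).mulVec (deriv (deriv v) x)) = deriv (deriv v) x := by
      rw [hB₀J, Matrix.mulVec_mulVec, hJA, Matrix.one_mulVec]
    rw [← h2, h1, map_sub, map_smul, _root_.smul_apply, sub_eq_add_neg]
  · intro p hp
    simp only [hp, map_zero, neg_zero]

lemma uniform_bound {S : Type*} (f : ℕ → S → ℝ) (n : ℕ)
    (h : ∀ k ≤ n, ∃ M, ∀ x, f k x ≤ M) : ∃ M, 1 ≤ M ∧ ∀ k ≤ n, ∀ x, f k x ≤ M := by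
  induction n with
  | zero =>
    obtain ⟨M, hM⟩ := h 0 le_rfl
    exact ⟨max 1 M, le_max_left _ _, fun k hk x => by
      obtain rfl := Nat.le_zero.1 hk
      exact (hM x).trans (le_max_right _ _)⟩
  | succ n ih =>
    obtain ⟨M, hM1, hM⟩ := ih fun k hk => h k (by omega)
    obtain ⟨M', hM'⟩ := h (n + 1) le_rfl
    refine ⟨max M M', hM1.trans (le_max_left _ _), fun k hk x => ?_⟩
    rcases Nat.lt_or_ge n k with hk' | hk'
    · obtain rfl : k = n + 1 := by omega
      exact (hM' x).trans (le_max_right _ _)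
    · exact (hM k hk' x).trans (le_max_left _ _)

/-- A composition `H ∘ v` has bounded `n`-th derivative when `v` has bounded derivatives up to
order `n`: the range of `v` lies in a compact ball, on which the derivatives of `H` are bounded. -/
lemma comp_bound {E : Type*} [NormedAddCommGroup E] [NormedSpace ℝ E] [ProperSpace E]
    (H : E → E) (v : ℝ → E) (n : ℕ) (hH : ContDiff ℝ n H) (hv : ContDiff ℝ n v)
    (hb : ∀ k ≤ n, ∃ M, ∀ x, ‖iteratedDeriv k v x‖ ≤ M) :
    ∃ M, ∀ x, ‖iteratedDeriv n (H ∘ v) x‖ ≤ M := by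
  obtain ⟨D, hD1, hD⟩ := uniform_bound (fun k x => ‖iteratedDeriv k v x‖) n hb
  have hball : ∀ x, v x ∈ Metric.closedBall (0 : E) D := fun x => by
    simpa using hD 0 (Nat.zero_le n) x
  obtain ⟨C, -, hC⟩ := uniform_bound
    (fun k (x : ℝ) => ‖iteratedFDeriv ℝ k H (v x)‖) n (fun k hk => by
      obtain ⟨M, hM⟩ := (isCompact_closedBall (0 : E) D).exists_bound_of_continuousOn
        (hH.continuous_iteratedFDeriv (m := k) (by exact_mod_cast hk)).continuousOn
      exact ⟨M, fun x => hM _ (hball x)⟩)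
  refine ⟨n.factorial * C * D ^ n, fun x => ?_⟩
  rw [← norm_iteratedFDeriv_eq_norm_iteratedDeriv]
  refine norm_iteratedFDeriv_comp_le hH hv le_rfl x (fun i hi => hC i hi x) (fun i h1 hi => ?_)
  rw [norm_iteratedFDeriv_eq_norm_iteratedDeriv]
  exact (hD i hi x).trans (le_self_pow₀ hD1 (by omega))

/-- One bootstrapping step for `v'' = B v' + H(v)`: a gain of one bounded derivative. -/
lemma regularity_step {E : Type*} [NormedAddCommGroup E] [NormedSpace ℝ E] [ProperSpace E]
    (B : E →L[ℝ] E) (H : E → E) (v : ℝ → E) (n : ℕ) (hH : ContDiff ℝ n H)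
    (hode : deriv (deriv v) = fun x => B (deriv v x) + H (v x))
    (hv : ContDiff ℝ (n + 1 : ℕ) v)
    (hd : Differentiable ℝ (deriv v))
    (hb : ∀ k ≤ n + 1, ∃ M, ∀ x, ‖iteratedDeriv k v x‖ ≤ M) :
    ContDiff ℝ (n + 2 : ℕ) v ∧ ∀ k ≤ n + 2, ∃ M, ∀ x, ‖iteratedDeriv k v x‖ ≤ M := by
  have hv' : ContDiff ℝ ((n : WithTop ℕ∞) + 1) v := by exact_mod_cast hv
  have hvd := contDiff_succ_iff_deriv.1 hv'
  have hvn : ContDiff ℝ n v := hv.of_le (by exact_mod_cast Nat.le_succ n)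
  have c1 : ContDiff ℝ n (B ∘ deriv v) := B.contDiff.comp hvd.2.2
  have c2 : ContDiff ℝ n (H ∘ v) := hH.comp hvn
  have hode' : deriv (deriv v) = (B ∘ deriv v) + (H ∘ v) := hode
  have hntop : (n : WithTop ℕ∞) ≠ ⊤ := by simp
  have hdv : ContDiff ℝ ((n : WithTop ℕ∞) + 1) (deriv v) :=
    contDiff_succ_iff_deriv.2 ⟨hd, fun h => absurd h hntop, by rw [hode']; exact c1.add c2⟩
  refine ⟨?_, ?_⟩
  · have : ContDiff ℝ (((n : WithTop ℕ∞) + 1) + 1) v :=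
      contDiff_succ_iff_deriv.2 ⟨hvd.1, fun h => absurd h (by exact_mod_cast (by simp)), hdv⟩
    exact_mod_cast this
  · intro k hk
    rcases Nat.lt_or_ge (n + 1) k with hk' | hk'
    swap
    · exact hb k hk'
    obtain rfl : k = n + 2 := by omega
    obtain ⟨M₁, hM₁⟩ := hb (n + 1) le_rfl
    obtain ⟨M₂, hM₂⟩ := comp_bound H v n hH hvn (fun k hk => hb k (by omega))
    refine ⟨‖B‖ * M₁ + M₂, fun x => ?_⟩
    rw [iteratedDeriv_succ', iteratedDeriv_succ', hode',
      iteratedDeriv_add c1.contDiffAt c2.contDiffAt]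
    refine (norm_add_le _ _).trans (add_le_add ?_ (hM₂ x))
    rw [← norm_iteratedFDeriv_eq_norm_iteratedDeriv]
    refine (B.norm_iteratedFDeriv_comp_left hvd.2.2.contDiffAt le_rfl).trans ?_
    rw [norm_iteratedFDeriv_eq_norm_iteratedDeriv, ← iteratedDeriv_succ']
    exact mul_le_mul_of_nonneg_left (hM₁ x) (norm_nonneg _)

/-- If `H p = 0`, then `v''` and `v'''` are dominated by `|v - p| + |v'|` on the whole line, because
`v` stays in a ball on which `H` is Lipschitz. -/
lemma pointwise_bound {E : Type*} [NormedAddCommGroup E] [NormedSpace ℝ E] [ProperSpace E]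
    (B : E →L[ℝ] E) (H : E → E) (v : ℝ → E) (p : E) (M : ℝ) (hH : ContDiff ℝ 1 H)
    (hode : deriv (deriv v) = fun x => B (deriv v x) + H (v x))
    (hv : Differentiable ℝ v) (hd : Differentiable ℝ (deriv v)) (hM : ∀ x, ‖v x‖ ≤ M)
    (hp : H p = 0) :
    ∃ C > 0, ∀ x, ‖v x - p‖ + ‖deriv v x‖ + ‖iteratedDeriv 2 v x‖ + ‖iteratedDeriv 3 v x‖
      ≤ C * (‖v x - p‖ + ‖deriv v x‖) := by
  set R := max M ‖p‖ with hR
  obtain ⟨T, hT⟩ := (isCompact_closedBall (0 : E) R).exists_bound_of_continuousOn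
    (hH.continuous_fderiv one_ne_zero).continuousOn
  have hHd : Differentiable ℝ H := hH.differentiable one_ne_zero
  have hvR : ∀ x, v x ∈ Metric.closedBall (0 : E) R := fun x => by
    rw [mem_closedBall_zero_iff]
    exact (hM x).trans (le_max_left _ _)
  have hpR : p ∈ Metric.closedBall (0 : E) R := by simp [hR]
  have hT0 : 0 ≤ T := (norm_nonneg _).trans (hT p hpR)
  have hlip : ∀ x, ‖H (v x)‖ ≤ T * ‖v x - p‖ := fun x => by
    have := Convex.norm_image_sub_le_of_norm_fderiv_le (𝕜 := ℝ) (fun y _ => hHd y) hT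
      (convex_closedBall (0 : E) R) hpR (hvR x)
    rwa [hp, sub_zero] at this
  have i2 : iteratedDeriv 2 v = deriv (deriv v) := by
    rw [iteratedDeriv_succ', iteratedDeriv_one]
  have i3 : iteratedDeriv 3 v = deriv (deriv (deriv v)) := by
    rw [iteratedDeriv_succ', iteratedDeriv_succ', iteratedDeriv_one]
  have b2 : ∀ x, ‖deriv (deriv v) x‖ ≤ ‖B‖ * ‖deriv v x‖ + T * ‖v x - p‖ := fun x => by
    rw [hode]
    exact (norm_add_le _ _).trans (add_le_add (B.le_opNorm _) (hlip x))
  have b3 : ∀ x, ‖deriv (deriv (deriv v)) x‖ ≤ ‖B‖ * ‖deriv (deriv v) x‖ + T * ‖deriv v x‖ :=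
    fun x => by
      have h1 : HasDerivAt (fun x => B (deriv v x) + H (v x))
          (B (deriv (deriv v) x) + fderiv ℝ H (v x) (deriv v x)) x :=
        (B.hasFDerivAt.comp_hasDerivAt x (hd x).hasDerivAt).add
          ((hHd (v x)).hasFDerivAt.comp_hasDerivAt x (hv x).hasDerivAt)
      rw [← hode] at h1
      rw [h1.deriv]
      refine (norm_add_le _ _).trans (add_le_add (B.le_opNorm _) ?_)
      exact ((fderiv ℝ H (v x)).le_opNorm _).trans
        (mul_le_mul_of_nonneg_right (hT _ (hvR x)) (norm_nonneg _))
  refine ⟨1 + ((1 + ‖B‖) * (‖B‖ + T) + T), by positivity, fun x => ?_⟩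
  rw [i2, i3]
  have hB := norm_nonneg B
  set w := ‖v x - p‖
  set z := ‖deriv v x‖
  have hw : 0 ≤ w := norm_nonneg _
  have hz : 0 ≤ z := norm_nonneg _
  have k1 : ‖deriv (deriv v) x‖ ≤ (‖B‖ + T) * (w + z) := by
    have := b2 x
    have := mul_nonneg hB hw
    have := mul_nonneg hT0 hz
    linarith
  have k2 := mul_le_mul_of_nonneg_left k1 (by positivity : 0 ≤ 1 + ‖B‖)
  have k3 := b3 x
  have k4 := mul_nonneg hT0 hw
  linarith

/-- Theorem 2.2 (exponential decay of the profile): under Assumptions A1 and A2 the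
profile `v⋆` is `C⁵` with bounded derivatives up to order five, and the profile and its
first three derivatives approach the rest states exponentially fast. -/
theorem profile_exponential_decay
    (α₁ α₂ c ω : ℝ) (g₁ g₂ : ℝ → ℝ)
    (vs : ℝ → Fin 2 → ℝ) (vinf : Fin 2 → ℝ)
    -- Assumption A1
    (hα₁ : 0 < α₁) (hg₁ : ContDiff ℝ 3 g₁) (hg₂ : ContDiff ℝ 3 g₂) (hg₁0 : g₁ 0 < 0)
    -- Assumption A2
    (hsmooth : ContDiff ℝ 2 vs)
    (hbdd : ∃ M : ℝ, ∀ x : ℝ,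
      ‖vs x‖ ≤ M ∧ ‖deriv vs x‖ ≤ M ∧ ‖deriv (deriv vs) x‖ ≤ M)
    (hc : 0 < c)
    (hprofile : ProfileEq α₁ α₂ c ω g₁ g₂ vs)
    (hminus : Tendsto vs atBot (𝓝 0))
    (hplus : Tendsto vs atTop (𝓝 vinf))
    (hvinf1 : vinf 1 = 0) (hvinf0 : 0 < vinf 0)
    (hg₁' : deriv g₁ (sq2 vinf) < 0) :
    (ContDiff ℝ 5 vs ∧ ∀ k : ℕ, k ≤ 5 → ∃ M : ℝ, ∀ x : ℝ, ‖iteratedDeriv k vs x‖ ≤ M) ∧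
    ∃ K : ℝ, 0 < K ∧ ∃ μs : ℝ, 0 < μs ∧
      (∀ x : ℝ, 0 ≤ x →
        ‖vs x - vinf‖ + ‖deriv vs x‖ + ‖iteratedDeriv 2 vs x‖ + ‖iteratedDeriv 3 vs x‖
          ≤ K * Real.exp (-μs * x)) ∧
      (∀ x : ℝ, x ≤ 0 →
        ‖vs x‖ + ‖deriv vs x‖ + ‖iteratedDeriv 2 vs x‖ + ‖iteratedDeriv 3 vs x‖
          ≤ K * Real.exp (μs * x)) := by
  obtain ⟨M, hM⟩ := hbdd
  obtain ⟨B, H, hH, hode, hHzero⟩ := explicit_form α₁ α₂ c ω g₁ g₂ hα₁ hg₁ hg₂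
  have hode := hode vs hprofile
  have h2 : ContDiff ℝ ((1 : WithTop ℕ∞) + 1) vs := by rw [one_add_one_eq_two]; exact hsmooth
  have h3 := contDiff_succ_iff_deriv.1 h2
  have hd : Differentiable ℝ (deriv vs) := h3.2.2.differentiable one_ne_zero
  have tc := fun (l : Filter ℝ) (p : Fin 2 → ℝ) (h : Tendsto vs l (𝓝 p)) (i : Fin 2) =>
    (tendsto_pi_nhds.1 h) i
  have hsq : sq2 vinf = vinf 0 ^ 2 := by simp [sq2, hvinf1]
  rw [hsq] at hg₁'
  have l1 : Tendsto (fun x => vs x 1) atTop (𝓝 0) := by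
    have := tc _ _ hplus 1
    rwa [hvinf1] at this
  have hg₁d : Differentiable ℝ g₁ := hg₁.differentiable (by norm_num)
  have hg₂d : Differentiable ℝ g₂ := hg₂.differentiable (by norm_num)
  have hM2 : ∀ x, ‖deriv (deriv vs) x‖ ≤ M := fun x => (hM x).2.2
  refine ⟨?_, ?_⟩
  · have b2 : ∀ k ≤ 1 + 1, ∃ M, ∀ x, ‖iteratedDeriv k vs x‖ ≤ M := by
      intro k hk
      refine ⟨M, fun x => ?_⟩
      interval_cases k
      · simpa using (hM x).1
      · simpa using (hM x).2.1
      · rw [iteratedDeriv_succ', iteratedDeriv_one]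
        exact (hM x).2.2
    obtain ⟨s3, b3⟩ := regularity_step B H vs 1 (hH.of_le (by norm_num)) hode
      (by exact_mod_cast hsmooth) hd b2
    obtain ⟨s4, b4⟩ := regularity_step B H vs 2 (hH.of_le (by norm_num)) hode s3 hd b3
    obtain ⟨s5, b5⟩ := regularity_step B H vs 3 (by exact_mod_cast hH) hode s4 hd b4
    exact ⟨by exact_mod_cast s5, b5⟩
  · obtain ⟨q1, q2⟩ := equilibrium hg₁d.continuous hg₂d.continuous hsmooth hM2 hprofile
      (tc _ _ hplus 0) l1 hvinf0
    have hHinf : H vinf = 0 := by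
      refine hHzero _ ?_
      ext i
      fin_cases i
      · simp [Smat, fnl, gmat, hsq, q1, hvinf1, dotProduct, Fin.sum_univ_two]
      · simp [Smat, fnl, gmat, hsq, q1, hvinf1, dotProduct, Fin.sum_univ_two]
        linear_combination vinf 0 * q2
    have hH0 : H 0 = 0 := hHzero _ (by simp [fnl])
    obtain ⟨C₁, hC₁, hp⟩ := pointwise_bound B H vs vinf M (hH.of_le (by norm_num)) hode h3.1 hd
      (fun x => (hM x).1) hHinf
    obtain ⟨C₂, hC₂, hm⟩ := pointwise_bound B H vs 0 M (hH.of_le (by norm_num)) hode h3.1 hd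
      (fun x => (hM x).1) hH0
    obtain ⟨K₁, hK₁, μ₁, hμ₁, hdp⟩ := extend_decay (fun x => ‖vs x - vinf‖ + ‖deriv vs x‖)
      (M + ‖vinf‖ + M) (fun x => add_le_add ((norm_sub_le _ _).trans
        (by linarith [(hM x).1])) (hM x).2.1) (by
        obtain ⟨X, K, hK, μ, hμ, h⟩ := decay_plus hα₁ hc hg₁d hg₂d hsmooth hM2 hprofile
          (tc _ _ hplus 0) l1 hvinf0 hg₁'
        refine ⟨X, K, hK, μ, hμ, fun x hx => le_trans ?_ (h x hx)⟩
        have e1 := vec_norm_le (vs x - vinf)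
        have e2 := vec_norm_le (deriv vs x)
        rw [Pi.sub_apply, Pi.sub_apply, hvinf1] at e1
        linarith)
    obtain ⟨K₂, hK₂, μ₂, hμ₂, hdm⟩ := extend_decay
      (fun x => ‖vs (-x) - 0‖ + ‖deriv vs (-x)‖)
      (M + M) (fun x => add_le_add (by rw [sub_zero]; exact (hM (-x)).1) (hM (-x)).2.1) (by
        obtain ⟨X, K, hK, μ, hμ, h⟩ := decay_minus hα₁ hg₁d.continuous hg₂d.continuous hsmooth
          hM2 hprofile (tc _ _ hminus 0) (tc _ _ hminus 1) hg₁0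
        refine ⟨X, K, hK, μ, hμ, fun x hx => le_trans ?_ (h x hx)⟩
        have e1 := vec_norm_le (vs (-x) - 0)
        have e2 := vec_norm_le (deriv vs (-x))
        rw [Pi.sub_apply, Pi.sub_apply, Pi.zero_apply, Pi.zero_apply] at e1
        rw [abs_neg, abs_neg]
        linarith)
    have hexp : ∀ {C K μ y : ℝ}, 0 < C → 0 < K → min μ₁ μ₂ ≤ μ → C * K ≤ C₁ * K₁ + C₂ * K₂ →
        0 ≤ y → C * (K * Real.exp (-μ * y)) ≤
          (C₁ * K₁ + C₂ * K₂) * Real.exp (-min μ₁ μ₂ * y) := by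
      intro C K μ y hC hK hμ hCK hy
      rw [← mul_assoc]
      refine mul_le_mul hCK (Real.exp_le_exp.2 ?_) (Real.exp_pos _).le (by positivity)
      exact mul_le_mul_of_nonneg_right (neg_le_neg hμ) hy
    refine ⟨C₁ * K₁ + C₂ * K₂, by positivity, min μ₁ μ₂, lt_min hμ₁ hμ₂, ?_, ?_⟩
    · intro x hx
      refine (hp x).trans ((mul_le_mul_of_nonneg_left (hdp x hx) hC₁.le).trans ?_)
      exact hexp hC₁ hK₁ (min_le_left _ _) (le_add_of_nonneg_right (by positivity)) hx
    · intro x hx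
      have h0 := hdm (-x) (by linarith)
      simp only [neg_neg] at h0
      have h1 := (hm x).trans ((mul_le_mul_of_nonneg_left h0 hC₂.le).trans
        (hexp hC₂ hK₂ (min_le_right _ _) (le_add_of_nonneg_left (by positivity))
          (by linarith : 0 ≤ -x)))
      rw [sub_zero, neg_mul_neg] at h1
      exact h1
end
end

section
/- Let m ≥ 1, let A be an m×m real matrix all of whose complex eigenvalues have positive real part, and let c > 0. Let r : ℝ → ℝ^m be continuous and possess limits as x → +∞ and as x → −∞, and let v : ℝ → ℝ^m be a bounded, twice continuously differentiable solution of A v''(x) + c v'(x) = r(x) for all x ∈ ℝ. Then r(x) → 0, v'(x) → 0 and v''(x) → 0 both as x → +∞ and as x → −∞. -/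
/-!
Testing the system against a covector `p : Fin m → ℂ` reduces it to scalar equations. If
`(Aᵀ - μ)ᵏ⁺¹ p = 0` and `q = (Aᵀ - μ) p`, then `φ = ⟨p, v⟩` satisfies
`μ φ'' + c φ' = ⟨p, r⟩ - ⟨q, v''⟩`; by induction on the rank `⟨q, v''⟩ → 0`, so the right-hand
side has a limit. Generalized eigenvectors of `Aᵀ` span `ℂᵐ`, so the scalar case suffices
(`pairing_tendsto`).

In the scalar case (`scalar_case`) `f = φ'` solves `f' = -β f + ρ / μ` with `β = c / μ`,
`re β > 0`, and `ρ → R`. At `+∞` damping forces `f → R / c`. At `-∞` the same holds because the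
integrated equation `μ f + c φ = ∫ ρ` shows that `f` grows at most linearly, whereas nonzero
homogeneous solutions grow exponentially. Since `φ` is bounded, the limit of `φ'` must be `0`;
hence `R = 0`, and `φ'' → 0` by the equation.
-/

open Matrix Filter Topology

noncomputable section

/-! ### Limits of derivatives of bounded functions -/

/-- If the derivative of a bounded function converges at `+∞`, its limit is `0`. -/
lemma limit_zero_atTop {φ f : ℝ → ℂ} (hφ : ∀ x, HasDerivAt φ (f x) x) {M : ℝ}
    (hM : ∀ x, ‖φ x‖ ≤ M) {L : ℂ} (hf : Tendsto f atTop (𝓝 L)) : L = 0 := by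
  by_contra hL
  have hLpos : 0 < ‖L‖ := norm_pos_iff.mpr hL
  obtain ⟨X, hX⟩ := eventually_atTop.mp
    (Metric.tendsto_nhds.mp hf (‖L‖ / 2) (by positivity))
  have key : ∀ x, X ≤ x → ‖L‖ / 2 * (x - X) ≤ 2 * M := by
    intro x hx
    have hmv := (convex_Ici X).norm_image_sub_le_of_norm_hasDerivWithin_le
      (f := fun t : ℝ => φ t - t • L) (f' := fun t => f t - (1 : ℝ) • L) (C := ‖L‖ / 2)
      (fun t _ => ((hφ t).sub ((hasDerivAt_id t).smul_const L)).hasDerivWithinAt)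
      (fun t ht => by
        have := hX t ht
        rw [dist_eq_norm] at this
        simpa using this.le) (Set.mem_Ici.mpr le_rfl) (Set.mem_Ici.mpr hx)
    have h1 : ‖(x - X) • L‖ ≤ ‖φ x - φ X‖ + ‖(φ x - x • L) - (φ X - X • L)‖ := by
      have : (x - X) • L = (φ x - φ X) - ((φ x - x • L) - (φ X - X • L)) := by
        rw [sub_smul]; ring
      rw [this]
      exact norm_sub_le _ _
    have h2 : ‖φ x - φ X‖ ≤ 2 * M := by
      linarith [norm_sub_le (φ x) (φ X), hM x, hM X]
    have h0 : 0 ≤ x - X := by linarith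
    rw [norm_smul, Real.norm_of_nonneg h0] at h1
    rw [Real.norm_of_nonneg h0] at hmv
    linarith
  have hM0 : 0 ≤ M := (norm_nonneg _).trans (hM 0)
  have h := key (X + (4 * M + 1) / ‖L‖) (by
    have : 0 ≤ (4 * M + 1) / ‖L‖ := by positivity
    linarith)
  have e : ‖L‖ / 2 * (X + (4 * M + 1) / ‖L‖ - X) = (4 * M + 1) / 2 := by
    field_simp
    ring
  linarith

lemma limit_zero_atBot {φ f : ℝ → ℂ} (hφ : ∀ x, HasDerivAt φ (f x) x) {M : ℝ}
    (hM : ∀ x, ‖φ x‖ ≤ M) {L : ℂ} (hf : Tendsto f atBot (𝓝 L)) : L = 0 := by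
  have h : ∀ x, HasDerivAt (fun t => φ (-t)) (-f (-x)) x := fun x => by
    exact ((hφ (-x)).scomp x (hasDerivAt_neg x)).congr_deriv (by simp)
  have := limit_zero_atTop h (fun x => hM (-x)) (hf.comp tendsto_neg_atTop_atBot).neg
  simpa using this

/-! ### Damped scalar first-order equations -/

/-- Variation of constants for `F' = -β F + e`, as an inequality: the initial value is damped
at rate `re β`, and a forcing term of size `ε` contributes at most `ε / re β`. -/
lemma damped_bound {β : ℂ} (hβ : 0 < β.re) {F e : ℝ → ℂ}
    (hF : ∀ x, HasDerivAt F (-β * F x + e x) x) {y x ε : ℝ} (hyx : y ≤ x)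
    (he : ∀ t ∈ Set.Icc y x, ‖e t‖ ≤ ε) :
    ‖F x‖ ≤ Real.exp (-(β.re * (x - y))) * ‖F y‖ + ε / β.re := by
  have hexp : ∀ t : ℝ, ‖Complex.exp (β * ((t - y : ℝ) : ℂ))‖ = Real.exp (β.re * (t - y)) := by
    intro t
    rw [Complex.norm_exp, Complex.re_mul_ofReal]
  have hG : ∀ t : ℝ, HasDerivAt (fun t : ℝ => Complex.exp (β * ((t - y : ℝ) : ℂ)) * F t)
      (Complex.exp (β * ((t - y : ℝ) : ℂ)) * e t) t := by
    intro t
    have h1 : HasDerivAt (fun t : ℝ => β * ((t - y : ℝ) : ℂ)) β t := by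
      simpa using (((hasDerivAt_id t).sub_const y).ofReal_comp).const_mul β
    refine (h1.cexp.mul (hF t)).congr_deriv ?_
    ring
  have hB : ∀ t : ℝ, HasDerivAt
      (fun t : ℝ => ‖F y‖ + ε / β.re * (Real.exp (β.re * (t - y)) - 1))
      (ε * Real.exp (β.re * (t - y))) t := by
    intro t
    have h1 : HasDerivAt (fun t : ℝ => β.re * (t - y)) β.re t := by
      simpa using ((hasDerivAt_id t).sub_const y).const_mul β.re
    refine (((h1.exp.sub_const 1).const_mul (ε / β.re)).const_add ‖F y‖).congr_deriv ?_
    field_simp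
  have h := image_norm_le_of_norm_deriv_right_le_deriv_boundary (a := y) (b := x)
    (fun t _ => (hG t).continuousAt.continuousWithinAt)
    (fun t _ => (hG t).hasDerivWithinAt)
    (B := fun t : ℝ => ‖F y‖ + ε / β.re * (Real.exp (β.re * (t - y)) - 1))
    (by simp) hB
    (fun t ht => by
      rw [norm_mul, hexp, mul_comm]
      exact mul_le_mul_of_nonneg_right (he t ⟨ht.1, ht.2.le⟩) (Real.exp_pos _).le)
    (Set.right_mem_Icc.mpr hyx)
  rw [norm_mul, hexp] at h
  have hε : 0 ≤ ε := (norm_nonneg _).trans (he y ⟨le_rfl, hyx⟩)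
  have hq : 0 ≤ ε / β.re := by positivity
  have hE := Real.exp_pos (β.re * (x - y))
  rw [Real.exp_neg]
  have h2 : Real.exp (β.re * (x - y)) * ‖F x‖ ≤
      Real.exp (β.re * (x - y)) *
        ((Real.exp (β.re * (x - y)))⁻¹ * ‖F y‖ + ε / β.re) := by
    rw [mul_add, mul_inv_cancel_left₀ hE.ne']
    linarith
  exact le_of_mul_le_mul_left h2 hE

lemma damped_atTop {β : ℂ} (hβ : 0 < β.re) {F e : ℝ → ℂ}
    (hF : ∀ x, HasDerivAt F (-β * F x + e x) x) (he : Tendsto e atTop (𝓝 0)) :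
    Tendsto F atTop (𝓝 0) := by
  rw [Metric.tendsto_nhds]
  intro ε hε
  obtain ⟨X, hX⟩ := eventually_atTop.mp
    (Metric.tendsto_nhds.mp he (ε / 2 * β.re) (by positivity))
  have hlim : Tendsto (fun x : ℝ => Real.exp (-(β.re * (x - X))) * ‖F X‖) atTop (𝓝 0) := by
    have h1 : Tendsto (fun x : ℝ => β.re * (x - X)) atTop atTop :=
      (tendsto_atTop_add_const_right _ (-X) tendsto_id).const_mul_atTop hβ
    simpa using (Real.tendsto_exp_neg_atTop_nhds_zero.comp h1).mul_const ‖F X‖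
  filter_upwards [eventually_ge_atTop X, hlim.eventually_lt_const (half_pos hε)] with x hx hx2
  have h := damped_bound hβ hF hx (ε := ε / 2 * β.re)
    (fun t ht => by simpa using (hX t ht.1).le)
  rw [mul_div_cancel_right₀ _ hβ.ne'] at h
  rw [dist_zero_right]
  linarith

/-- Towards `-∞` the homogeneous solutions grow exponentially, so at most linear growth of `F`
excludes them. -/
lemma damped_atBot {β : ℂ} (hβ : 0 < β.re) {F e : ℝ → ℂ}
    (hF : ∀ x, HasDerivAt F (-β * F x + e x) x) (he : Tendsto e atBot (𝓝 0))
    {C : ℝ} (hgrow : ∀ᶠ y in atBot, ‖F y‖ ≤ C * (1 + |y|)) :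
    Tendsto F atBot (𝓝 0) := by
  rw [Metric.tendsto_nhds]
  intro ε hε
  obtain ⟨X, hX⟩ := eventually_atBot.mp
    (Metric.tendsto_nhds.mp he (ε / 2 * β.re) (by positivity))
  filter_upwards [eventually_le_atBot X] with x hx
  have hlim : Tendsto (fun y : ℝ => Real.exp (-(β.re * (x - y))) * (C * (1 + |y|)))
      atBot (𝓝 0) := by
    have h0 : Tendsto (fun s : ℝ => Real.exp (-(β.re * s))) atTop (𝓝 0) :=
      Real.tendsto_exp_neg_atTop_nhds_zero.comp (tendsto_id.const_mul_atTop hβ)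
    have h1 : Tendsto (fun s : ℝ => s * Real.exp (-(β.re * s))) atTop (𝓝 0) := by
      have := tendsto_rpow_mul_exp_neg_mul_atTop_nhds_zero 1 β.re hβ
      simpa using this
    have h2 : Tendsto (fun s : ℝ => Real.exp (-(β.re * x)) *
        (C * Real.exp (-(β.re * s)) + C * (s * Real.exp (-(β.re * s))))) atTop (𝓝 0) := by
      simpa using ((h0.const_mul C).add (h1.const_mul C)).const_mul (Real.exp (-(β.re * x)))
    refine (h2.comp tendsto_neg_atBot_atTop).congr' ?_
    filter_upwards [eventually_le_atBot 0] with y hy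
    have : Real.exp (-(β.re * (x - y))) =
        Real.exp (-(β.re * x)) * Real.exp (-(β.re * -y)) := by
      rw [← Real.exp_add]; ring_nf
    simp only [Function.comp]
    rw [this, abs_of_nonpos hy]
    ring
  have hle : ‖F x‖ ≤ 0 + ε / 2 := by
    refine ge_of_tendsto (hlim.add_const (ε / 2)) ?_
    filter_upwards [eventually_le_atBot x, hgrow] with y hy hg
    have h := damped_bound hβ hF hy (ε := ε / 2 * β.re)
      (fun t ht => by simpa using (hX t (ht.2.trans hx)).le)
    rw [mul_div_cancel_right₀ _ hβ.ne'] at h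
    have := mul_le_mul_of_nonneg_left hg (Real.exp_pos (-(β.re * (x - y)))).le
    linarith
  rw [dist_zero_right]
  linarith

/-! ### The scalar second-order equation -/

/-- The scalar case `μ φ'' + c φ' = ρ`, for `l` one of the two ends of the line. -/
lemma scalar_case {μ : ℂ} (hμ : 0 < μ.re) {c : ℝ} (hc : 0 < c) {φ f g ρ : ℝ → ℂ}
    (hφ : ∀ x, HasDerivAt φ (f x) x) (hf : ∀ x, HasDerivAt f (g x) x)
    {M : ℝ} (hM : ∀ x, ‖φ x‖ ≤ M) (heq : ∀ x, μ * g x + c * f x = ρ x)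
    {l : Filter ℝ} (hl : l = atTop ∨ l = atBot) {R : ℂ} (hρ : Tendsto ρ l (𝓝 R)) :
    Tendsto f l (𝓝 0) ∧ Tendsto g l (𝓝 0) := by
  have hμ0 : μ ≠ 0 := by rintro rfl; simp at hμ
  have hc0 : (c : ℂ) ≠ 0 := by exact_mod_cast hc.ne'
  have hβ : 0 < ((c : ℂ) / μ).re := by
    rw [Complex.div_re]
    have := Complex.normSq_pos.mpr hμ0
    simp
    positivity
  -- `R / c` is the equilibrium of the limiting equation for `f`.
  have hF : ∀ x, HasDerivAt (fun t => f t - R / c)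
      (-((c : ℂ) / μ) * (f x - R / c) + (ρ x - R) / μ) x := by
    intro x
    refine ((hf x).sub_const (R / c)).congr_deriv ?_
    rw [← heq x]
    field_simp
    ring
  have he : Tendsto (fun x => (ρ x - R) / μ) l (𝓝 0) := by
    simpa using (hρ.sub_const R).div_const μ
  have hfR : Tendsto f l (𝓝 (R / c)) := by
    suffices h : Tendsto (fun t => f t - R / c) l (𝓝 0) by
      simpa using h.add_const (R / c)
    rcases hl with rfl | rfl
    · exact damped_atTop hβ hF he
    · -- `μ f + c φ` has derivative `ρ`, hence grows at most linearly, and `φ` is bounded.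
      obtain ⟨X, hX⟩ := eventually_atBot.mp
        (hρ.norm.eventually_le_const (lt_add_one ‖R‖))
      refine damped_atBot hβ hF he
        (C := ((‖R‖ + 1) * (1 + |X|) + ‖μ * f X + c * φ X‖ + c * M) / ‖μ‖ + ‖R / c‖) ?_
      filter_upwards [eventually_le_atBot X] with y hy
      have hmv := (convex_Iic X).norm_image_sub_le_of_norm_hasDerivWithin_le
        (f := fun t : ℝ => μ * f t + c * φ t) (f' := ρ) (C := ‖R‖ + 1)
        (fun t _ => by
          have := ((hf t).const_mul μ).add ((hφ t).const_mul (c : ℂ))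
          rw [heq t] at this
          exact this.hasDerivWithinAt)
        (fun t ht => hX t ht) (Set.mem_Iic.mpr le_rfl) (Set.mem_Iic.mpr hy)
      have hM0 : 0 ≤ M := (norm_nonneg _).trans (hM 0)
      have h1 : ‖μ‖ * ‖f y‖ ≤
          ‖(μ * f y + c * φ y) - (μ * f X + c * φ X)‖ + ‖μ * f X + c * φ X‖ + c * M := by
        have e1 : μ * f y = ((μ * f y + c * φ y) - (μ * f X + c * φ X))
            + (μ * f X + c * φ X) - c * φ y := by ring
        have e2 : ‖(c : ℂ) * φ y‖ ≤ c * M := by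
          rw [norm_mul, Complex.norm_real, Real.norm_of_nonneg hc.le]
          exact mul_le_mul_of_nonneg_left (hM y) hc.le
        rw [← norm_mul]
        conv_lhs => rw [e1]
        refine (norm_sub_le _ _).trans (add_le_add (norm_add_le _ _) e2)
      have h2 : ‖y - X‖ ≤ |y| + |X| := norm_sub_le y X
      have hR : 0 ≤ ‖R‖ + 1 := by positivity
      have h3 := mul_le_mul_of_nonneg_left h2 hR
      have hμn : 0 < ‖μ‖ := norm_pos_iff.mpr hμ0
      have h4 : ‖f y‖ ≤
          ((‖R‖ + 1) * (1 + |X|) + ‖μ * f X + c * φ X‖ + c * M) / ‖μ‖ * (1 + |y|) := by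
        rw [div_mul_eq_mul_div, le_div_iff₀ hμn]
        have p1 : 0 ≤ ‖μ * f X + c * φ X‖ * |y| := by positivity
        have p2 : 0 ≤ c * M * |y| := by positivity
        have p3 : 0 ≤ (‖R‖ + 1) * (|X| * |y|) := by positivity
        nlinarith
      have h5 : ‖f y - R / c‖ ≤ ‖f y‖ + ‖R / c‖ := norm_sub_le _ _
      have h6 : 0 ≤ ‖R / c‖ * |y| := by positivity
      rw [add_mul]
      linarith
  have hR0 : R / c = 0 := by
    rcases hl with rfl | rfl
    · exact limit_zero_atTop hφ hM hfR
    · exact limit_zero_atBot hφ hM hfR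
  rw [hR0] at hfR
  refine ⟨hfR, ?_⟩
  have hR : R = 0 := by simpa [hc0] using hR0
  have hg : g = fun x => (ρ x - c * f x) / μ := by
    funext x
    rw [← heq x]
    field_simp
    ring
  rw [hg]
  simpa [hR] using (hρ.sub (hfR.const_mul (c : ℂ))).div_const μ

/-! ### Reduction of the system to generalized eigenvectors -/

/-- The bilinear pairing of a complex covector with a real vector. -/
def pairing {m : ℕ} (p : Fin m → ℂ) (w : Fin m → ℝ) : ℂ := ∑ i, p i * (w i : ℂ)

lemma pairing_add {m : ℕ} (p q : Fin m → ℂ) (w : Fin m → ℝ) :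
    pairing (p + q) w = pairing p w + pairing q w := by
  simp [pairing, add_mul, Finset.sum_add_distrib]

lemma pairing_smul {m : ℕ} (a : ℂ) (p : Fin m → ℂ) (w : Fin m → ℝ) :
    pairing (a • p) w = a * pairing p w := by
  simp [pairing, Finset.mul_sum, mul_assoc]

lemma pairing_mulVec {m : ℕ} (A : Matrix (Fin m) (Fin m) ℝ) (p : Fin m → ℂ)
    (w : Fin m → ℝ) :
    pairing ((A.map (fun a : ℝ => (a : ℂ)))ᵀ.mulVec p) w = pairing p (A.mulVec w) := by
  simp only [pairing, Matrix.mulVec, dotProduct, Matrix.transpose_apply, Matrix.map_apply,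
    Complex.ofReal_sum, Complex.ofReal_mul, Finset.mul_sum, Finset.sum_mul]
  rw [Finset.sum_comm]
  refine Finset.sum_congr rfl fun i _ => Finset.sum_congr rfl fun j _ => ?_
  ring

lemma pairing_continuous {m : ℕ} (p : Fin m → ℂ) : Continuous (pairing p) := by
  unfold pairing
  fun_prop

lemma pairing_hasDerivAt {m : ℕ} (p : Fin m → ℂ) {w : ℝ → Fin m → ℝ} {w' : Fin m → ℝ} {x : ℝ}
    (hw : HasDerivAt w w' x) : HasDerivAt (fun t => pairing p (w t)) (pairing p w') x := by
  unfold pairing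
  exact HasDerivAt.fun_sum fun i _ => ((hasDerivAt_pi.mp hw i).ofReal_comp).const_mul (p i)

lemma pairing_bound {m : ℕ} (p : Fin m → ℂ) {w : Fin m → ℝ} {M : ℝ} (hw : ‖w‖ ≤ M) :
    ‖pairing p w‖ ≤ ∑ i, ‖p i‖ * M := by
  refine (norm_sum_le _ _).trans (Finset.sum_le_sum fun i _ => ?_)
  rw [norm_mul, Complex.norm_real]
  exact mul_le_mul_of_nonneg_left ((norm_le_pi_norm w i).trans hw) (norm_nonneg _)

/-- Both conclusions on the derivatives, tested against an arbitrary covector. The equation for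
a generalized eigenvector `p` of rank `k + 1` is scalar up to `pairing q v''`, where
`q = Aᵀ p - μ p` has rank `k`. -/
lemma pairing_tendsto {m : ℕ} (A : Matrix (Fin m) (Fin m) ℝ) {c : ℝ} (hc : 0 < c)
    (hA : ∀ μ : ℂ,
      (μ • (1 : Matrix (Fin m) (Fin m) ℂ) - A.map (fun a : ℝ => (a : ℂ))).det = 0 →
      0 < μ.re)
    {r v w z : ℝ → Fin m → ℝ} {l : Filter ℝ} (hl : l = atTop ∨ l = atBot)
    {R : Fin m → ℝ} (hr : Tendsto r l (𝓝 R))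
    (hv : ∀ x, HasDerivAt v (w x) x) (hw : ∀ x, HasDerivAt w (z x) x)
    {M : ℝ} (hM : ∀ x, ‖v x‖ ≤ M) (heq : ∀ x, A.mulVec (z x) + c • w x = r x)
    (p : Fin m → ℂ) :
    Tendsto (fun x => pairing p (w x)) l (𝓝 0) ∧
      Tendsto (fun x => pairing p (z x)) l (𝓝 0) := by
  set B : Matrix (Fin m) (Fin m) ℂ := (A.map (fun a : ℝ => (a : ℂ)))ᵀ with hB
  set T : Module.End ℂ (Fin m → ℂ) := Matrix.toLin' B with hT
  have hzero : Tendsto (fun x => pairing (0 : Fin m → ℂ) (w x)) l (𝓝 0) ∧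
      Tendsto (fun x => pairing (0 : Fin m → ℂ) (z x)) l (𝓝 0) := by
    simp [pairing, tendsto_const_nhds]
  have heig : ∀ μ, T.HasEigenvalue μ → 0 < μ.re := by
    intro μ hμ
    obtain ⟨x, hx⟩ := hμ.exists_hasEigenvector
    apply hA
    rw [← Matrix.det_transpose]
    refine Matrix.exists_mulVec_eq_zero_iff.mp ⟨x, hx.2, ?_⟩
    have := hx.apply_eq_smul
    rw [hT, Matrix.toLin'_apply, hB] at this
    rw [Matrix.transpose_sub, Matrix.sub_mulVec, this]
    simp [Matrix.smul_mulVec]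
  have hgen : ∀ (μ : ℂ) (k : ℕ) (p : Fin m → ℂ),
      ((T - μ • (1 : Module.End ℂ (Fin m → ℂ))) ^ k) p = 0 →
      Tendsto (fun x => pairing p (w x)) l (𝓝 0) ∧
      Tendsto (fun x => pairing p (z x)) l (𝓝 0) := by
    intro μ k
    induction k with
    | zero =>
      intro p hp
      have : p = 0 := by simpa using hp
      rw [this]
      exact hzero
    | succ k ih =>
      intro p hp
      by_cases hp0 : p = 0
      · rw [hp0]
        exact hzero
      have hμ : 0 < μ.re := by
        refine heig μ (Module.End.hasEigenvalue_of_hasGenEigenvalue (k := k + 1) ?_)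
        intro hbot
        apply hp0
        have : p ∈ T.genEigenspace μ ((k + 1 : ℕ) : ℕ∞) :=
          Module.End.mem_genEigenspace_nat.mpr hp
        rw [hbot] at this
        simpa using this
      set q : Fin m → ℂ := (T - μ • (1 : Module.End ℂ (Fin m → ℂ))) p with hq
      have hTp : B.mulVec p = μ • p + q := by
        rw [hq]
        simp [hT]
      have hz := (ih q (by rw [pow_succ] at hp; exact hp)).2
      have hrho : Tendsto (fun x => pairing p (r x) - pairing q (z x)) l
          (𝓝 (pairing p R - 0)) :=
        (((pairing_continuous p).tendsto R).comp hr).sub hz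
      refine scalar_case hμ hc (fun x => pairing_hasDerivAt p (hv x))
        (fun x => pairing_hasDerivAt p (hw x)) (fun x => pairing_bound p (hM x)) ?_ hl hrho
      intro x
      have h1 : pairing p (r x) = pairing p (A.mulVec (z x)) + c * pairing p (w x) := by
        rw [← heq x]
        simp only [pairing, Pi.add_apply, Pi.smul_apply, smul_eq_mul, Complex.ofReal_add,
          Complex.ofReal_mul, mul_add, Finset.sum_add_distrib, Finset.mul_sum]
        congr 1
        exact Finset.sum_congr rfl fun i _ => by ring
      rw [h1, ← pairing_mulVec, ← hB, hTp, pairing_add, pairing_smul]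
      ring
  have htop : p ∈ ⨆ μ, T.maxGenEigenspace μ := by
    rw [Module.End.iSup_maxGenEigenspace_eq_top]
    trivial
  induction htop using Submodule.iSup_induction' with
  | mem μ p hp =>
    obtain ⟨k, hk⟩ := (Module.End.mem_maxGenEigenspace T μ p).mp hp
    exact hgen μ k p hk
  | zero => exact hzero
  | add p q _ _ hp hq =>
    simp only [pairing_add]
    exact ⟨by simpa using hp.1.add hq.1, by simpa using hp.2.add hq.2⟩

lemma tendsto_zero_of_pairing {m : ℕ} {w : ℝ → Fin m → ℝ} {l : Filter ℝ}
    (h : ∀ p, Tendsto (fun x => pairing p (w x)) l (𝓝 0)) : Tendsto w l (𝓝 0) := by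
  rw [tendsto_pi_nhds]
  intro i
  have h1 := (Complex.continuous_re.tendsto 0).comp (h (Pi.single i 1))
  simpa [pairing, Function.comp_def, Pi.single_apply] using h1

lemma limits_at_end_s3 {m : ℕ} (A : Matrix (Fin m) (Fin m) ℝ) {c : ℝ} (hc : 0 < c)
    (hA : ∀ μ : ℂ,
      (μ • (1 : Matrix (Fin m) (Fin m) ℂ) - A.map (fun a : ℝ => (a : ℂ))).det = 0 →
      0 < μ.re)
    {r v : ℝ → Fin m → ℝ} {l : Filter ℝ} (hl : l = atTop ∨ l = atBot)
    {R : Fin m → ℝ} (hr : Tendsto r l (𝓝 R)) (hv : ContDiff ℝ 2 v)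
    {M : ℝ} (hM : ∀ x, ‖v x‖ ≤ M)
    (heq : ∀ x, A.mulVec (deriv (deriv v) x) + c • deriv v x = r x) :
    Tendsto r l (𝓝 0) ∧ Tendsto (deriv v) l (𝓝 0) ∧ Tendsto (deriv (deriv v)) l (𝓝 0) := by
  have hd1 : ∀ x, HasDerivAt v (deriv v x) x := fun x =>
    (hv.differentiable (by norm_num) x).hasDerivAt
  have hd2 : ∀ x, HasDerivAt (deriv v) (deriv (deriv v) x) x := fun x =>
    (((contDiff_succ_iff_deriv (n := 1)).mp hv).2.2.differentiable (by norm_num) x).hasDerivAt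
  have h := pairing_tendsto A hc hA hl hr hd1 hd2 hM heq
  have h1 := tendsto_zero_of_pairing fun p => (h p).1
  have h2 := tendsto_zero_of_pairing fun p => (h p).2
  refine ⟨?_, h1, h2⟩
  have hcont : Continuous fun y : Fin m → ℝ => A.mulVec y :=
    Continuous.matrix_mulVec continuous_const continuous_id
  have h3 := ((hcont.tendsto 0).comp h2).add (h1.const_smul c)
  simpa using h3.congr heq

/-- Lemma A.1 (limits of solutions): if all complex eigenvalues of `A` have positive real
part, `c > 0`, `r` is continuous with limits at `±∞`, and `v` is a bounded `C²` solution of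
`A v'' + c v' = r`, then `r`, `v'` and `v''` all tend to `0` at `±∞`. -/
theorem limits_of_bounded_solutions
    (m : ℕ) (hm : 1 ≤ m)
    (A : Matrix (Fin m) (Fin m) ℝ) (c : ℝ) (hc : 0 < c)
    (hA : ∀ μ : ℂ,
      (μ • (1 : Matrix (Fin m) (Fin m) ℂ) - A.map (fun a : ℝ => (a : ℂ))).det = 0 →
      0 < μ.re)
    (r : ℝ → Fin m → ℝ) (hrcont : Continuous r)
    (hrp : ∃ rp : Fin m → ℝ, Tendsto r atTop (𝓝 rp))
    (hrm : ∃ rm : Fin m → ℝ, Tendsto r atBot (𝓝 rm))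
    (v : ℝ → Fin m → ℝ) (hv : ContDiff ℝ 2 v)
    (hvbdd : ∃ M : ℝ, ∀ x : ℝ, ‖v x‖ ≤ M)
    (heq : ∀ x : ℝ, A.mulVec (deriv (deriv v) x) + c • deriv v x = r x) :
    Tendsto r atTop (𝓝 0) ∧ Tendsto r atBot (𝓝 0) ∧
    Tendsto (deriv v) atTop (𝓝 0) ∧ Tendsto (deriv v) atBot (𝓝 0) ∧
    Tendsto (deriv (deriv v)) atTop (𝓝 0) ∧ Tendsto (deriv (deriv v)) atBot (𝓝 0) := by
  obtain ⟨rp, hrp⟩ := hrp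
  obtain ⟨rm, hrm⟩ := hrm
  obtain ⟨M, hM⟩ := hvbdd
  obtain ⟨a1, a2, a3⟩ := limits_at_end_s3 A hc hA (Or.inl rfl) hrp hv hM heq
  obtain ⟨b1, b2, b3⟩ := limits_at_end_s3 A hc hA (Or.inr rfl) hrm hv hM heq
  exact ⟨a1, b1, a2, b2, a3, b3⟩
end
end

section
/- Suppose ε, ν, C, C̃ > 0 satisfy C ≥ 1 and ε ≤ ν/(16 C̃ C). Let 0 < t∞ ≤ ∞ and let φ : [0, t∞) → [0, ∞) be continuous and satisfy φ(t) ≤ C ε e^{−ν t} + C̃ ∫₀ᵗ e^{−ν(t−s)} (φ(s)² + ε φ(s)) ds for all t ∈ [0, t∞). Then φ(t) ≤ 2 C ε e^{−(3/4) ν t} for all t ∈ [0, t∞). -/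
/-!
Bootstrap argument. If the claimed bound failed, there would be a first time `t₀` at which
`φ t₀ ≥ 2 C ε e^{-3νt₀/4}`, with strict inequality in the other direction on `[0, t₀)`.
There `φ² + ε φ ≤ (4C² + 2C) ε² e^{-3νs/4} ≤ 6 C² ε² e^{-3νs/4}` (`C ≥ 1` is used here), and
`∫₀ᵗ e^{-ν(t-s)} e^{-3νs/4} ds = (4/ν) (e^{-3νt/4} - e^{-νt})` (`integral_exp_conv`). Since
`C̃ ε ≤ ν / (16 C)`, the hypothesis at `t₀` gives
`φ t₀ ≤ (3/2) C ε e^{-3νt₀/4} - (1/2) C ε e^{-νt₀} < 2 C ε e^{-3νt₀/4}`, a contradiction.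
-/

open Filter Topology MeasureTheory
open scoped ENNReal

noncomputable section

lemma integral_exp_conv (ν t : ℝ) (hν : 0 < ν) (ht : 0 ≤ t) :
    ∫ s in Set.Ico (0 : ℝ) t, Real.exp (-ν * (t - s)) * Real.exp (-(3 / 4) * ν * s) =
      4 / ν * (Real.exp (-(3 / 4) * ν * t) - Real.exp (-ν * t)) := by
  rw [← integral_Icc_eq_integral_Ico, integral_Icc_eq_integral_Ioc,
    ← intervalIntegral.integral_of_le ht]
  have hderiv : ∀ s ∈ Set.uIcc 0 t,
      HasDerivAt (fun s => 4 / ν * Real.exp (-ν * t + ν / 4 * s))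
        (Real.exp (-ν * (t - s)) * Real.exp (-(3 / 4) * ν * s)) s := by
    intro s _
    have h := ((((hasDerivAt_id s).const_mul (ν / 4)).const_add (-ν * t)).exp).const_mul (4 / ν)
    refine h.congr_deriv ?_
    rw [← Real.exp_add, show -ν * (t - s) + -(3 / 4) * ν * s = -ν * t + ν / 4 * s by ring]
    simp only [id]
    field_simp
  rw [intervalIntegral.integral_eq_sub_of_hasDerivAt hderiv
    (Continuous.intervalIntegrable (by fun_prop) _ _)]
  rw [show -ν * t + ν / 4 * t = -(3 / 4) * ν * t by ring,
    show -ν * t + ν / 4 * 0 = -ν * t by ring]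
  ring

/-- Lemma 7.2 (Gronwall lemma): if `ε, ν, C, C̃ > 0` with `C ≥ 1` and
`ε ≤ ν/(16 C̃ C)`, and a continuous nonnegative function `φ` on `[0, t∞)` satisfies
`φ(t) ≤ C ε e^{−ν t} + C̃ ∫₀ᵗ e^{−ν(t−s)} (φ(s)² + ε φ(s)) ds`, then
`φ(t) ≤ 2 C ε e^{−(3/4) ν t}` on `[0, t∞)`. -/
theorem gronwall_estimate
    (ε ν C Ct : ℝ) (hε : 0 < ε) (hν : 0 < ν) (hC0 : 0 < C) (hCt : 0 < Ct)
    (hC : 1 ≤ C) (hsmall : ε ≤ ν / (16 * Ct * C))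
    (tinf : ℝ≥0∞) (htinf : 0 < tinf)
    (φ : ℝ → ℝ)
    (hcont : ContinuousOn φ {t : ℝ | 0 ≤ t ∧ ENNReal.ofReal t < tinf})
    (hnonneg : ∀ t : ℝ, 0 ≤ t → ENNReal.ofReal t < tinf → 0 ≤ φ t)
    (hineq : ∀ t : ℝ, 0 ≤ t → ENNReal.ofReal t < tinf →
      φ t ≤ C * ε * Real.exp (-ν * t) +
        Ct * ∫ s in Set.Icc (0 : ℝ) t, Real.exp (-ν * (t - s)) * (φ s ^ 2 + ε * φ s)) :
    ∀ t : ℝ, 0 ≤ t → ENNReal.ofReal t < tinf →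
      φ t ≤ 2 * C * ε * Real.exp (-(3 / 4) * ν * t) := by
  intro T hT0 hT
  by_contra! hfail
  have hsub : Set.Icc 0 T ⊆ {t : ℝ | 0 ≤ t ∧ ENNReal.ofReal t < tinf} := fun t ht =>
    ⟨ht.1, (ENNReal.ofReal_le_ofReal ht.2).trans_lt hT⟩
  have hφ : ContinuousOn φ (Set.Icc 0 T) := hcont.mono hsub
  have hclosed : IsClosed
      {t ∈ Set.Icc 0 T | 2 * C * ε * Real.exp (-(3 / 4) * ν * t) ≤ φ t} :=
    isClosed_Icc.isClosed_le (by fun_prop) hφ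
  -- `t₀` is the first time at which the bound is attained or violated.
  obtain ⟨t₀, ⟨ht₀, hge⟩, hleast⟩ :=
    (isCompact_Icc.of_isClosed_subset hclosed (Set.sep_subset _ _)).exists_isLeast
      ⟨T, ⟨hT0, le_rfl⟩, hfail.le⟩
  have hbefore : ∀ s ∈ Set.Ico 0 t₀, φ s ≤ 2 * C * ε * Real.exp (-(3 / 4) * ν * s) := by
    intro s hs
    by_contra! h
    exact absurd (hleast ⟨⟨hs.1, hs.2.le.trans ht₀.2⟩, h.le⟩) (not_le.mpr hs.2)
  have hφ₀ : ContinuousOn φ (Set.Icc 0 t₀) := hφ.mono (Set.Icc_subset_Icc_right ht₀.2)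
  have hint : ∫ s in Set.Icc (0 : ℝ) t₀, Real.exp (-ν * (t₀ - s)) * (φ s ^ 2 + ε * φ s) ≤
      6 * C ^ 2 * ε ^ 2 *
        (4 / ν * (Real.exp (-(3 / 4) * ν * t₀) - Real.exp (-ν * t₀))) := by
    rw [← integral_exp_conv ν t₀ hν ht₀.1, integral_Icc_eq_integral_Ico,
      ← integral_const_mul]
    refine setIntegral_mono_on ?_ ?_ measurableSet_Ico ?_
    · exact (ContinuousOn.integrableOn_Icc (by fun_prop)).mono_set Set.Ico_subset_Icc_self
    · exact (ContinuousOn.integrableOn_Icc (by fun_prop)).mono_set Set.Ico_subset_Icc_self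
    · intro s hs
      have h1 := hbefore s hs
      have h0 : 0 ≤ φ s :=
        hnonneg s hs.1 (hsub ⟨hs.1, hs.2.le.trans ht₀.2⟩).2
      have hE1 : Real.exp (-(3 / 4) * ν * s) ≤ 1 :=
        Real.exp_le_one_iff.mpr (by nlinarith [mul_nonneg hν.le hs.1])
      have hE0 := Real.exp_pos (-(3 / 4) * ν * s)
      set E := Real.exp (-(3 / 4) * ν * s)
      have hsq : φ s ^ 2 ≤ 4 * C ^ 2 * ε ^ 2 * E := by
        calc φ s ^ 2 ≤ (2 * C * ε * E) ^ 2 := by gcongr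
          _ = 4 * C ^ 2 * ε ^ 2 * E * E := by ring
          _ ≤ 4 * C ^ 2 * ε ^ 2 * E * 1 := by gcongr
          _ = _ := mul_one _
      have hlin : ε * φ s ≤ 2 * C ^ 2 * ε ^ 2 * E := by
        calc ε * φ s ≤ ε * (2 * C * ε * E) := by gcongr
          _ = 2 * (C * 1) * ε ^ 2 * E := by ring
          _ ≤ 2 * (C * C) * ε ^ 2 * E := by gcongr
          _ = _ := by ring
      calc Real.exp (-ν * (t₀ - s)) * (φ s ^ 2 + ε * φ s)
          ≤ Real.exp (-ν * (t₀ - s)) * (6 * C ^ 2 * ε ^ 2 * E) := by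
            gcongr
            linarith
        _ = _ := by ring
  have hmain := hineq t₀ ht₀.1 (hsub ht₀).2
  have hexp : Real.exp (-ν * t₀) ≤ Real.exp (-(3 / 4) * ν * t₀) :=
    Real.exp_le_exp.mpr (by nlinarith [mul_nonneg hν.le ht₀.1])
  have hpos := Real.exp_pos (-ν * t₀)
  set A := Real.exp (-(3 / 4) * ν * t₀)
  set B := Real.exp (-ν * t₀)
  have hsmall' : ε * (16 * Ct * C) ≤ ν := (le_div_iff₀ (by positivity)).mp hsmall
  have hD : 0 ≤ A - B := sub_nonneg.mpr hexp
  have hquad : Ct * (6 * C ^ 2 * ε ^ 2 * (4 / ν * (A - B))) ≤ 3 / 2 * C * ε * (A - B) := by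
    calc Ct * (6 * C ^ 2 * ε ^ 2 * (4 / ν * (A - B)))
        = (ε * (16 * Ct * C)) * (3 / 2 * C * ε * (A - B) / ν) := by ring
      _ ≤ ν * (3 / 2 * C * ε * (A - B) / ν) := by gcongr
      _ = _ := by field_simp
  have hCtint := mul_le_mul_of_nonneg_left hint hCt.le
  have hCε : 0 < C * ε := mul_pos hC0 hε
  nlinarith [mul_pos hCε hpos, mul_nonneg hCε.le hD]

end
end

section
/- Let α, β ∈ ℂ with Re α > 0 and Re β < 0, and let c > 0 be a real number. Then there exist λ₋, λ₊ ∈ ℂ with Re λ₋ < 0 < Re λ₊ such that α λ² + c λ + β = α (λ − λ₋)(λ − λ₊) for all λ ∈ ℂ. In particular, the quadratic α λ² + c λ + β has no purely imaginary root. -/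
noncomputable section

/-!
Let `p, q` be the two roots, so that `α (p + q) = -c` and `α p q = β`. Since `c > 0`, the first
relation says that `α` is a positive multiple of `-conj (p + q)`, hence `Re (p + q) < 0`, and the
root of smaller real part, say `p`, satisfies `Re p < 0`. Eliminating `α` gives
`β (1/p + 1/q) = -c`, so in the same way `Re β < 0` forces `Re (1/p + 1/q) > 0`; as `Re (1/p) < 0`,
this is impossible unless `Re q > 0`. A purely imaginary root would be `p` or `q`, so there is none.
-/

/-- The real part of `|w|² z = -r conj w`; for `r > 0` it shows that the real parts of `z` and `w`
have opposite signs. -/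
lemma normSq_mul_re_of_mul_eq_neg {z w : ℂ} {r : ℝ} (h : z * w = -(r : ℂ)) :
    Complex.normSq w * z.re = -(r * w.re) := by
  have hre := congrArg Complex.re h
  have him := congrArg Complex.im h
  simp at hre him
  rw [Complex.normSq_apply]
  linear_combination w.re * hre + w.im * him

/-- The roots `p`, `q`, characterized by Vieta's formulas and ordered by real part, lie strictly on
opposite sides of the imaginary axis. -/
lemma re_neg_and_re_pos_of_vieta {α β p q : ℂ} {c : ℝ} (hα : 0 < α.re) (hβ : β.re < 0)
    (hc : 0 < c) (hsum : α * (p + q) = -(c : ℂ)) (hprod : α * (p * q) = β)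
    (hpq : p.re ≤ q.re) : p.re < 0 ∧ 0 < q.re := by
  have hs : p + q ≠ 0 := by
    intro h
    rw [h, mul_zero] at hsum
    have := congrArg Complex.re hsum
    simp at this
    exact hc.ne' this
  have hp : p.re < 0 := by
    have h1 := normSq_mul_re_of_mul_eq_neg hsum
    have h2 : 0 < Complex.normSq (p + q) * α.re := mul_pos (Complex.normSq_pos.2 hs) hα
    have h3 : 0 < c * -(p + q).re := by linarith
    have h4 := (mul_pos_iff_of_pos_left hc).1 h3
    rw [Complex.add_re] at h4
    linarith
  refine ⟨hp, ?_⟩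
  by_contra! hq
  have hq0 : q ≠ 0 := by
    rintro rfl
    simp [← hprod] at hβ
  -- `w = |p q|² (1/p + 1/q)`
  set w : ℂ := Complex.normSq p * (starRingEnd ℂ) q + Complex.normSq q * (starRingEnd ℂ) p with hw
  have hwre : w.re < 0 := by
    have h1 : w.re = Complex.normSq p * q.re + Complex.normSq q * p.re := by simp [hw]
    have h2 := mul_nonneg (Complex.normSq_nonneg p) (neg_nonneg.2 hq)
    have h3 := mul_pos (Complex.normSq_pos.2 hq0) (neg_pos.2 hp)
    linarith
  have hw0 : w ≠ 0 := by
    intro h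
    simp [h] at hwre
  have hβw : β * w = -((c * (Complex.normSq p * Complex.normSq q) : ℝ) : ℂ) := by
    rw [hw, ← hprod]
    push_cast
    rw [← Complex.mul_conj p, ← Complex.mul_conj q]
    linear_combination
      (p * q * (starRingEnd ℂ) p * (starRingEnd ℂ) q) * hsum
  have h1 := normSq_mul_re_of_mul_eq_neg hβw
  have h2 := mul_pos (Complex.normSq_pos.2 hw0) (neg_pos.2 hβ)
  have h3 := mul_nonneg (mul_nonneg hc.le
    (mul_nonneg (Complex.normSq_nonneg p) (Complex.normSq_nonneg q))) (neg_nonneg.2 hwre.le)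
  linarith

/-- Factorization of the quadratic `α λ² + c λ + β` with `Re α > 0`, `Re β < 0`, `c > 0`:
it has one root with negative real part and one with positive real part, and in particular
no purely imaginary root. -/
theorem quadratic_root_splitting
    (α β : ℂ) (c : ℝ) (hα : 0 < α.re) (hβ : β.re < 0) (hc : 0 < c) :
    ∃ lm lp : ℂ, lm.re < 0 ∧ 0 < lp.re ∧
      (∀ l : ℂ, α * l ^ 2 + (c : ℂ) * l + β = α * (l - lm) * (l - lp)) ∧
      (∀ l : ℂ, l.re = 0 → α * l ^ 2 + (c : ℂ) * l + β ≠ 0) := by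
  have hα0 : α ≠ 0 := by
    rintro rfl
    simp at hα
  obtain ⟨p, q, hsum, hprod, hpq⟩ : ∃ p q : ℂ, α * (p + q) = -(c : ℂ) ∧ α * (p * q) = β ∧
      p.re ≤ q.re := by
    obtain ⟨d, hd⟩ := IsAlgClosed.exists_pow_nat_eq ((c : ℂ) ^ 2 - 4 * α * β) two_pos
    have hsum : α * ((-c + d) / (2 * α) + (-c - d) / (2 * α)) = -(c : ℂ) := by
      field_simp
      ring
    have hprod : α * ((-c + d) / (2 * α) * ((-c - d) / (2 * α))) = β := by
      field_simp
      linear_combination -hd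
    rcases le_total ((-c + d) / (2 * α)).re ((-c - d) / (2 * α)).re with h | h
    · exact ⟨_, _, hsum, hprod, h⟩
    · exact ⟨_, _, by rw [add_comm]; exact hsum, by rw [mul_comm (_ / _)]; exact hprod, h⟩
  obtain ⟨hp, hq⟩ := re_neg_and_re_pos_of_vieta hα hβ hc hsum hprod hpq
  have hfac : ∀ l : ℂ, α * l ^ 2 + (c : ℂ) * l + β = α * (l - p) * (l - q) := by
    intro l
    linear_combination l * hsum - hprod
  refine ⟨p, q, hp, hq, hfac, fun l hl => ?_⟩
  rw [hfac]
  refine mul_ne_zero (mul_ne_zero hα0 (sub_ne_zero.2 ?_)) (sub_ne_zero.2 ?_)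
  · rintro rfl
    exact hp.ne hl
  · rintro rfl
    exact hq.ne' hl
end
end

section
/- Let α₁ > 0, α₂ ∈ ℝ, c > 0, and let ρ₁ < 0, ρ₂ ∈ ℝ satisfy α₁ρ₁ + α₂ρ₂ < 0. Then for every ν ∈ ℝ and every s ∈ ℂ with det(s I − D₊(ν)) = 0, one has Re s ≤ 0; moreover Re s = 0 occurs only when ν = 0 and s = 0. -/
/-!
Put `t = s - i c ν`, which has the same real part as `s`. The characteristic equation becomes
`t² + p t + q = 0` with real coefficients `p = 2 α₁ ν² - 2 ρ₁ > 0` and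
`q = (α₁² + α₂²) ν⁴ - 2 (α₁ ρ₁ + α₂ ρ₂) ν² ≥ 0`, where `q = 0` only for `ν = 0`.
If `Re t ≥ 0`, the imaginary part `Im t * (2 Re t + p) = 0` forces `t` to be real, and then all
terms of `t² + p t + q` are nonnegative, so `t = 0` and `q = 0`, i.e. `ν = 0` and `s = 0`
(`eq_zero_of_re_nonneg`).
-/

open Matrix

noncomputable section

/-- The dispersion matrix `D₊(ν)` with `δ₁(ν) = −α₁ν² + i c ν` and `δ₂(ν) = −α₂ν²`. -/
def Dplus (α₁ α₂ c ρ₁ ρ₂ ν : ℝ) : Matrix (Fin 2) (Fin 2) ℂ :=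
  !![(-(α₁ : ℂ) * (ν : ℂ) ^ 2 + Complex.I * (c : ℂ) * (ν : ℂ)) + 2 * (ρ₁ : ℂ),
      -(-(α₂ : ℂ) * (ν : ℂ) ^ 2);
     (-(α₂ : ℂ) * (ν : ℂ) ^ 2) + 2 * (ρ₂ : ℂ),
      -(α₁ : ℂ) * (ν : ℂ) ^ 2 + Complex.I * (c : ℂ) * (ν : ℂ)]

/-- A root of a real quadratic `t² + p t + q` with `p > 0`, `q ≥ 0` in the closed right half plane,
written in terms of `x = Re t` and `y = Im t`, can only be `0`, and then `q = 0`. -/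
lemma eq_zero_of_re_nonneg {x y p q : ℝ} (hp : 0 < p) (hq : 0 ≤ q) (hx : 0 ≤ x)
    (hre : x ^ 2 - y ^ 2 + p * x + q = 0) (him : y * (2 * x + p) = 0) :
    x = 0 ∧ y = 0 ∧ q = 0 := by
  have hy : y = 0 := by
    rcases mul_eq_zero.mp him with h | h
    · exact h
    · linarith
  subst hy
  have hpx : 0 ≤ p * x := by positivity
  have hx2 : x ^ 2 = 0 := by nlinarith [sq_nonneg x]
  exact ⟨by simpa using hx2, rfl, by nlinarith [sq_nonneg x]⟩

/-- Spectral stability at the rest state: under the spectral condition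
`α₁ρ₁ + α₂ρ₂ < 0` every eigenvalue `s` of `D₊(ν)` satisfies `Re s ≤ 0`, and `Re s = 0`
only occurs for `ν = 0` and `s = 0`. -/
theorem dispersion_curve_nonpositive
    (α₁ α₂ c ρ₁ ρ₂ : ℝ) (hα₁ : 0 < α₁) (hc : 0 < c) (hρ₁ : ρ₁ < 0)
    (hmix : α₁ * ρ₁ + α₂ * ρ₂ < 0) :
    ∀ (ν : ℝ) (s : ℂ),
      (s • (1 : Matrix (Fin 2) (Fin 2) ℂ) - Dplus α₁ α₂ c ρ₁ ρ₂ ν).det = 0 →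
      s.re ≤ 0 ∧ (s.re = 0 → ν = 0 ∧ s = 0) := by
  intro ν s h
  set p : ℝ := 2 * α₁ * ν ^ 2 - 2 * ρ₁ with hp_def
  set q : ℝ := (α₁ ^ 2 + α₂ ^ 2) * (ν ^ 2) ^ 2 + 2 * (-(α₁ * ρ₁ + α₂ * ρ₂)) * ν ^ 2 with hq_def
  have hp : 0 < p := by nlinarith [mul_nonneg hα₁.le (sq_nonneg ν)]
  have hmix' : 0 < -(α₁ * ρ₁ + α₂ * ρ₂) := by linarith
  have hq : 0 ≤ q := by positivity
  have hquad : (s - Complex.I * c * ν) ^ 2 + p * (s - Complex.I * c * ν) + q = 0 := by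
    rw [← h, Dplus, Matrix.det_fin_two]
    simp [hp_def, hq_def]
    ring
  have hre := congrArg Complex.re hquad
  have him := congrArg Complex.im hquad
  simp [pow_two] at hre him
  have key : 0 ≤ s.re → s.re = 0 ∧ s.im - c * ν = 0 ∧ q = 0 := fun hx =>
    eq_zero_of_re_nonneg hp hq hx (by linarith) (by linarith)
  refine ⟨?_, fun hx => ?_⟩
  · by_contra hneg
    push Not at hneg
    exact hneg.ne' (key hneg.le).1
  · obtain ⟨-, hy, hq0⟩ := key hx.ge
    have hν : ν = 0 := by
      by_contra hν
      have : 0 < q := by positivity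
      exact this.ne' hq0
    subst hν
    exact ⟨rfl, Complex.ext hx (by simpa using hy)⟩
end
end

section
/- Let α₁ > 0, α₂ ∈ ℝ, and let ρ₁ < 0, ρ₂ ∈ ℝ satisfy α₁ρ₁ + α₂ρ₂ < 0. Define R(ν) = ρ₁² + ρ₂² − (ρ₂ − α₂ν²)² and r(ν) = −α₁ν² + ρ₁ + √(max(R(ν), 0)) for ν ∈ ℝ. Then r(0) = 0, r(ν) < 0 for every ν ≠ 0, r is strictly decreasing on [0, ∞), and r is twice differentiable at ν = 0 with second derivative r''(0) = 2(α₁ρ₁ + α₂ρ₂)/|ρ₁| < 0. -/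
noncomputable section

/-!
In terms of `t = ν²` the radicand is the concave parabola `q(t) = ρ₁² + 2α₂ρ₂t - α₂²t²` with
`q(0) = ρ₁²`. If `s < t` and `q(s) < q(t)`, then the slope of the chord forces `q(s) ≥ ρ₁²`, so
`√q(t) - √q(s) = (q(t) - q(s)) / (√q(t) + √q(s)) ≤ 2α₂ρ₂(t - s) / (2|ρ₁|) < α₁(t - s)`,
so the linear term `-α₁t` outweighs the growth of the root (`sqrt_growth_lt`). This gives strict
monotonicity, and evenness of `r` gives negativity off the origin. Near `0` the radicand is
positive, so the truncation disappears there and `r''(0)` is computed by differentiating twice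
(`hasDerivAt_branch`, `hasDerivAt_branch_deriv`).
-/

/-- Along `t = ν²`, the truncated root grows strictly more slowly than `α₁ t`. -/
lemma sqrt_growth_lt {α₁ α₂ ρ₁ ρ₂ s t : ℝ} (hα₁ : 0 < α₁) (hρ₁ : ρ₁ < 0)
    (hmix : α₁ * ρ₁ + α₂ * ρ₂ < 0) (hs : 0 ≤ s) (hst : s < t) :
    √(max (ρ₁ ^ 2 + ρ₂ ^ 2 - (ρ₂ - α₂ * t) ^ 2) 0)
      < √(max (ρ₁ ^ 2 + ρ₂ ^ 2 - (ρ₂ - α₂ * s) ^ 2) 0) + α₁ * (t - s) := by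
  have hd : 0 < t - s := sub_pos.mpr hst
  have hαd : 0 < α₁ * (t - s) := mul_pos hα₁ hd
  set Qt := ρ₁ ^ 2 + ρ₂ ^ 2 - (ρ₂ - α₂ * t) ^ 2 with hQt
  set Qs := ρ₁ ^ 2 + ρ₂ ^ 2 - (ρ₂ - α₂ * s) ^ 2 with hQs
  rcases le_or_gt Qt Qs with h | h
  · have := Real.sqrt_le_sqrt (max_le_max_right 0 h)
    linarith
  · have hfac : Qt - Qs = (t - s) * (2 * (α₂ * ρ₂) - α₂ ^ 2 * (t + s)) := by
      rw [hQt, hQs]; ring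
    have hslope : 0 < 2 * (α₂ * ρ₂) - α₂ ^ 2 * (t + s) :=
      pos_of_mul_pos_right (hfac ▸ sub_pos.mpr h) hd.le
    have hsum : 0 ≤ α₂ ^ 2 * (t + s) := by
      have : 0 ≤ t := hs.trans hst.le
      positivity
    have hQs_ge : ρ₁ ^ 2 ≤ Qs := by
      have h1 : 0 ≤ s * (2 * (α₂ * ρ₂) - α₂ ^ 2 * s) := by
        apply mul_nonneg hs
        nlinarith [mul_nonneg (sq_nonneg α₂) (hs.trans hst.le)]
      have h2 : Qs = ρ₁ ^ 2 + s * (2 * (α₂ * ρ₂) - α₂ ^ 2 * s) := by rw [hQs]; ring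
      linarith
    have hQs0 : 0 ≤ Qs := (sq_nonneg ρ₁).trans hQs_ge
    have hQt0 : 0 ≤ Qt := hQs0.trans h.le
    rw [max_eq_left hQs0, max_eq_left hQt0]
    have hA : -ρ₁ ≤ √Qs := Real.le_sqrt_of_sq_le (by linarith [neg_sq ρ₁])
    have hA2 := Real.sq_sqrt hQs0
    have hB2 := Real.sq_sqrt hQt0
    have hAB : √Qs ≤ √Qt := Real.sqrt_le_sqrt h.le
    have hstep : α₁ * (-ρ₁ + -ρ₁) ≤ α₁ * (√Qs + √Qt) := by gcongr; linarith
    have hlt : (t - s) * (2 * (α₂ * ρ₂) - α₂ ^ 2 * (t + s)) < (t - s) * (α₁ * (√Qs + √Qt)) :=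
      mul_lt_mul_of_pos_left (by linarith) hd
    -- Divide the strict bound on `√Qt² - √Qs²` by the positive sum of the roots.
    have hprod : (√Qt - √Qs) * (√Qt + √Qs) < (α₁ * (t - s)) * (√Qt + √Qs) := by nlinarith
    have := lt_of_mul_lt_mul_right hprod (by linarith)
    linarith

/-- First derivative of `r` where the radicand is positive, so that the truncation is inactive. -/
lemma hasDerivAt_branch {α₁ α₂ ρ₁ ρ₂ ν : ℝ}
    (h : 0 < ρ₁ ^ 2 + ρ₂ ^ 2 - (ρ₂ - α₂ * ν ^ 2) ^ 2) :
    HasDerivAt (fun x : ℝ => -α₁ * x ^ 2 + ρ₁ + √(ρ₁ ^ 2 + ρ₂ ^ 2 - (ρ₂ - α₂ * x ^ 2) ^ 2))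
      (-2 * α₁ * ν + 2 * α₂ * ν * (ρ₂ - α₂ * ν ^ 2)
        / √(ρ₁ ^ 2 + ρ₂ ^ 2 - (ρ₂ - α₂ * ν ^ 2) ^ 2)) ν := by
  have hsq : HasDerivAt (fun x : ℝ => x ^ 2) (2 * ν) ν := by simpa using hasDerivAt_pow 2 ν
  have hrad := ((((hsq.const_mul α₂).const_sub ρ₂).pow 2).const_sub (ρ₁ ^ 2 + ρ₂ ^ 2)).sqrt h.ne'
  have hlin := (hsq.const_mul (-α₁)).add_const ρ₁
  refine (hlin.add hrad).congr_deriv ?_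
  have := (Real.sqrt_pos.mpr h).ne'
  simp only [Pi.pow_apply]
  field_simp
  ring

/-- Derivative at `0` of the first derivative found in `hasDerivAt_branch`. -/
lemma hasDerivAt_branch_deriv {α₁ α₂ ρ₁ ρ₂ : ℝ} (hρ₁ : ρ₁ < 0) :
    HasDerivAt (fun x : ℝ => -2 * α₁ * x + 2 * α₂ * x * (ρ₂ - α₂ * x ^ 2)
        / √(ρ₁ ^ 2 + ρ₂ ^ 2 - (ρ₂ - α₂ * x ^ 2) ^ 2))
      (2 * (α₁ * ρ₁ + α₂ * ρ₂) / |ρ₁|) 0 := by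
  have hval : √(ρ₁ ^ 2 + ρ₂ ^ 2 - (ρ₂ - α₂ * (0 : ℝ) ^ 2) ^ 2) = -ρ₁ := by
    rw [show ρ₁ ^ 2 + ρ₂ ^ 2 - (ρ₂ - α₂ * (0 : ℝ) ^ 2) ^ 2 = ρ₁ ^ 2 by ring,
      Real.sqrt_sq_eq_abs, abs_of_neg hρ₁]
  have hne : ρ₁ ^ 2 + ρ₂ ^ 2 - (ρ₂ - α₂ * (0 : ℝ) ^ 2) ^ 2 ≠ 0 := by
    rw [show ρ₁ ^ 2 + ρ₂ ^ 2 - (ρ₂ - α₂ * (0 : ℝ) ^ 2) ^ 2 = ρ₁ ^ 2 by ring]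
    exact pow_ne_zero 2 hρ₁.ne
  have hsq : HasDerivAt (fun x : ℝ => x ^ 2) 0 0 := by simpa using hasDerivAt_pow 2 (0 : ℝ)
  have hin := (hsq.const_mul α₂).const_sub ρ₂
  have hden := ((hin.pow 2).const_sub (ρ₁ ^ 2 + ρ₂ ^ 2)).sqrt hne
  have hnum := ((hasDerivAt_id (0 : ℝ)).const_mul (2 * α₂)).mul hin
  have hlin := (hasDerivAt_id (0 : ℝ)).const_mul (-2 * α₁)
  refine (hlin.add (hnum.div hden (by simp only [Pi.pow_apply]; rw [hval]; linarith))).congr_deriv ?_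
  simp only [Pi.pow_apply, Pi.mul_apply, id]
  rw [hval, abs_of_neg hρ₁]
  have := hρ₁.ne
  field_simp
  ring

/-- Behavior of `r(ν) = Re s₊(ν,0)`: it has a unique global maximum `r(0) = 0`, is
negative away from `ν = 0`, strictly decreasing on `[0,∞)`, and twice differentiable at
`ν = 0` with `r''(0) = 2(α₁ρ₁ + α₂ρ₂)/|ρ₁| < 0`. -/
theorem dispersion_real_part_maximum
    (α₁ α₂ ρ₁ ρ₂ : ℝ) (hα₁ : 0 < α₁) (hρ₁ : ρ₁ < 0)
    (hmix : α₁ * ρ₁ + α₂ * ρ₂ < 0)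
    (R r : ℝ → ℝ)
    (hR : ∀ ν : ℝ, R ν = ρ₁ ^ 2 + ρ₂ ^ 2 - (ρ₂ - α₂ * ν ^ 2) ^ 2)
    (hr : ∀ ν : ℝ, r ν = -α₁ * ν ^ 2 + ρ₁ + Real.sqrt (max (R ν) 0)) :
    r 0 = 0 ∧
    (∀ ν : ℝ, ν ≠ 0 → r ν < 0) ∧
    StrictAntiOn r (Set.Ici (0 : ℝ)) ∧
    DifferentiableAt ℝ r 0 ∧
    DifferentiableAt ℝ (deriv r) 0 ∧
    deriv (deriv r) 0 = 2 * (α₁ * ρ₁ + α₂ * ρ₂) / |ρ₁| ∧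
    deriv (deriv r) 0 < 0 := by
  have hr' : ∀ ν, r ν = -α₁ * ν ^ 2 + ρ₁
      + √(max (ρ₁ ^ 2 + ρ₂ ^ 2 - (ρ₂ - α₂ * ν ^ 2) ^ 2) 0) := fun ν => by rw [hr, hR]
  have h0 : r 0 = 0 := by
    rw [hr', show ρ₁ ^ 2 + ρ₂ ^ 2 - (ρ₂ - α₂ * (0 : ℝ) ^ 2) ^ 2 = ρ₁ ^ 2 by ring,
      max_eq_left (sq_nonneg ρ₁), Real.sqrt_sq_eq_abs, abs_of_neg hρ₁]
    ring
  have hanti : StrictAntiOn r (Set.Ici (0 : ℝ)) := by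
    intro x hx y _ hxy
    have hsq : x ^ 2 < y ^ 2 := pow_lt_pow_left₀ hxy hx two_ne_zero
    have := sqrt_growth_lt hα₁ hρ₁ hmix (sq_nonneg x) hsq
    rw [hr', hr']
    linarith
  have hneg : ∀ ν : ℝ, ν ≠ 0 → r ν < 0 := by
    intro ν hν
    have heven : r |ν| = r ν := by rw [hr', hr', sq_abs]
    rw [← heven, ← h0]
    exact hanti Set.self_mem_Ici (abs_nonneg ν) (abs_pos.mpr hν)
  have hev : ∀ᶠ ν in nhds (0 : ℝ), 0 < ρ₁ ^ 2 + ρ₂ ^ 2 - (ρ₂ - α₂ * ν ^ 2) ^ 2 := by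
    have hc : Continuous fun ν : ℝ => ρ₁ ^ 2 + ρ₂ ^ 2 - (ρ₂ - α₂ * ν ^ 2) ^ 2 := by fun_prop
    refine hc.continuousAt.eventually_const_lt ?_
    have := pow_pos (neg_pos.mpr hρ₁) 2
    nlinarith
  have hderiv : ∀ᶠ ν in nhds (0 : ℝ), HasDerivAt r (-2 * α₁ * ν + 2 * α₂ * ν * (ρ₂ - α₂ * ν ^ 2)
      / √(ρ₁ ^ 2 + ρ₂ ^ 2 - (ρ₂ - α₂ * ν ^ 2) ^ 2)) ν := by
    filter_upwards [hev.eventually_nhds] with ν hν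
    refine (hasDerivAt_branch hν.self_of_nhds).congr_of_eventuallyEq ?_
    filter_upwards [hν] with x hx
    rw [hr', max_eq_left hx.le]
  have hsecond : HasDerivAt (deriv r) (2 * (α₁ * ρ₁ + α₂ * ρ₂) / |ρ₁|) 0 :=
    (hasDerivAt_branch_deriv hρ₁).congr_of_eventuallyEq (hderiv.mono fun _ h => h.deriv)
  refine ⟨h0, hneg, hanti, hderiv.self_of_nhds.differentiableAt, hsecond.differentiableAt,
    hsecond.deriv, ?_⟩
  rw [hsecond.deriv]
  exact div_neg_of_neg_of_pos (by linarith) (abs_pos.mpr hρ₁.ne)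
end
end

section
/- Let α₁ > 0, α₂ ∈ ℝ, c > 0, and let ρ₁ < 0, ρ₂ ∈ ℝ satisfy α₁ρ₁ + α₂ρ₂ < 0, and set κ = |ρ₁α₁ + ρ₂α₂| / (4 c² |ρ₁|). Then there exists β > 0 such that for every ν ∈ ℝ and every s ∈ ℂ with det(s I − D₊(ν)) = 0 and |Im s| ≤ β, one has Re s ≤ −2κ (Im s)². -/
/-!
Write `w = s - δ₁(ν)`. The determinant condition is the real quadratic `w² - 2ρ₁w + q = 0` with
`q = δ₂² + 2ρ₂δ₂`. Take `β² = -ρ₁ / (2κ)`, so that `2κ(Im s)² ≤ -ρ₁` whenever `|Im s| ≤ β`.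

* If `w` is not real, then `Re w = ρ₁`, hence `Re s = ρ₁ - α₁ν² ≤ ρ₁ ≤ -2κ(Im s)²`.
* If `w` is real, then `Im s = cν`. Put `t = α₁ν² - 2κc²ν²`; the claim is `w ≤ t`. The quadratic
  increases strictly on `[ρ₁, ∞)`, and `t ≥ ρ₁` by the choice of `β`. Its value at `t` is
  `t² + α₂²ν⁴ + |ρ₁α₁ + ρ₂α₂|ν² ≥ 0`, so it has no root beyond `t`.
-/

open Matrix

noncomputable section

/-- Quadratic contact of the dispersion curve with the imaginary axis: with
`κ = |ρ₁α₁ + ρ₂α₂|/(4c²|ρ₁|)` there is `β > 0` such that every eigenvalue `s` of `D₊(ν)`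
with `|Im s| ≤ β` satisfies `Re s ≤ −2κ (Im s)²`. -/
theorem dispersion_quadratic_contact
    (α₁ α₂ c ρ₁ ρ₂ : ℝ) (hα₁ : 0 < α₁) (hc : 0 < c) (hρ₁ : ρ₁ < 0)
    (hmix : α₁ * ρ₁ + α₂ * ρ₂ < 0)
    (κ : ℝ) (hκ : κ = |ρ₁ * α₁ + ρ₂ * α₂| / (4 * c ^ 2 * |ρ₁|)) :
    ∃ β : ℝ, 0 < β ∧ ∀ (ν : ℝ) (s : ℂ),
      (s • (1 : Matrix (Fin 2) (Fin 2) ℂ) - Dplus α₁ α₂ c ρ₁ ρ₂ ν).det = 0 →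
      |s.im| ≤ β → s.re ≤ -2 * κ * s.im ^ 2 := by
  have hρabs : |ρ₁| = -ρ₁ := abs_of_neg hρ₁
  have hmabs : |ρ₁ * α₁ + ρ₂ * α₂| = -(ρ₁ * α₁ + ρ₂ * α₂) := abs_of_neg (by linarith)
  rw [hρabs, hmabs] at hκ
  have hden : 0 < 4 * c ^ 2 * -ρ₁ := by
    have : 0 < -ρ₁ := by linarith
    positivity
  have hκpos : 0 < κ := by
    rw [hκ]
    exact div_pos (by linarith) hden
  have hκm : κ * (4 * c ^ 2 * -ρ₁) = -(ρ₁ * α₁ + ρ₂ * α₂) := by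
    rw [hκ]
    exact div_mul_cancel₀ _ hden.ne'
  have hβ : 0 < -ρ₁ / (2 * κ) := div_pos (by linarith) (by linarith)
  refine ⟨√(-ρ₁ / (2 * κ)), Real.sqrt_pos.2 hβ, fun ν s hdet him => ?_⟩
  have hsmall : 2 * κ * s.im ^ 2 ≤ -ρ₁ := by
    have h1 : s.im ^ 2 ≤ -ρ₁ / (2 * κ) := by
      have h2 := pow_le_pow_left₀ (abs_nonneg s.im) him 2
      rwa [sq_abs, Real.sq_sqrt hβ.le] at h2
    rw [le_div_iff₀ (by linarith)] at h1
    linarith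
  -- `a` and `b` are the real and imaginary parts of `w = s - δ₁(ν)`.
  obtain ⟨a, ha⟩ : ∃ a, a = s.re + α₁ * ν ^ 2 := ⟨_, rfl⟩
  obtain ⟨b, hb⟩ : ∃ b, b = s.im - c * ν := ⟨_, rfl⟩
  have hre : a ^ 2 - b ^ 2 - 2 * ρ₁ * a + (α₂ ^ 2 * ν ^ 4 - 2 * ρ₂ * α₂ * ν ^ 2) = 0 := by
    have h := congrArg Complex.re hdet
    simp [Matrix.det_fin_two, Dplus, pow_succ] at h
    rw [ha, hb]
    linear_combination h
  have him0 : b * (a - ρ₁) = 0 := by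
    have h := congrArg Complex.im hdet
    simp [Matrix.det_fin_two, Dplus, pow_succ] at h
    rw [ha, hb]
    linear_combination h / 2
  rcases mul_eq_zero.1 him0 with h0 | h0
  · have hs : s.im = c * ν := by linarith
    rw [hs] at hsmall ⊢
    by_contra! hlt
    obtain ⟨t, ht⟩ : ∃ t, t = α₁ * ν ^ 2 - 2 * κ * (c * ν) ^ 2 := ⟨_, rfl⟩
    have hta : t < a := by linarith
    have htρ : ρ₁ ≤ t := by nlinarith [mul_nonneg hα₁.le (sq_nonneg ν)]
    have hmono : 0 < (a - t) * (a + t - 2 * ρ₁) :=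
      mul_pos (by linarith) (by linarith)
    have hval : t ^ 2 - 2 * ρ₁ * t + (α₂ ^ 2 * ν ^ 4 - 2 * ρ₂ * α₂ * ν ^ 2)
        = t ^ 2 + (α₂ * ν ^ 2) ^ 2 + -(ρ₁ * α₁ + ρ₂ * α₂) * ν ^ 2 := by
      rw [ht]
      linear_combination (-ν ^ 2) * hκm
    have hnonneg : 0 ≤ -(ρ₁ * α₁ + ρ₂ * α₂) * ν ^ 2 :=
      mul_nonneg (by linarith) (sq_nonneg ν)
    rw [h0] at hre
    nlinarith [sq_nonneg t, sq_nonneg (α₂ * ν ^ 2)]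
  · have := mul_nonneg hα₁.le (sq_nonneg ν)
    linarith
end
end
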